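/- Fix an integer d ≥ 1, p ∈ (1,∞), a penalty function φ, and let (μ_t)_{t≥0} be a convolution semigroup in 𝒫_p(ℝ^d) with 𝒲_p(μ_t, δ_0) → 0 as t ↓ 0. Let f ∈ C₀(ℝ^d) and define u : [0,∞) → C₀(ℝ^d) by u(t) := 𝒮(t)f. Then u is a viscosity solution of the equation ∂_t u(t,x) = A^μ u(t)(x) + φ*(|∇u(t,x)|) on (0,∞)×ℝ^d with initial condition u(0,x) = f(x). -/

import Mathlib

open MeasureTheory Filter Topology ENNReal NNReal Set ZeroAtInfty
noncomputable section

/-- Euclidean space ℝ^d. -/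
abbrev Ed (d : ℕ) := EuclideanSpace ℝ (Fin d)

/-- `𝒫_p(ℝ^d)`: Borel probability measures with finite `p`-th moment. -/
def MemPp {d : ℕ} (p : ℝ) (μ : Measure (Ed d)) : Prop :=
  IsProbabilityMeasure μ ∧ ∫⁻ x, (‖x‖₊ : ℝ≥0∞) ^ p ∂μ < ∞

/-- `γ` is a coupling of `μ` and `ν`. -/
def IsCoupling {d : ℕ} (γ : Measure (Ed d × Ed d)) (μ ν : Measure (Ed d)) : Prop :=
  γ.map Prod.fst = μ ∧ γ.map Prod.snd = ν

/-- The `p`-Wasserstein distance `𝒲_p(μ, ν)`. -/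
def Wp {d : ℕ} (p : ℝ) (μ ν : Measure (Ed d)) : ℝ :=
  (⨅ γ ∈ {γ : Measure (Ed d × Ed d) | IsCoupling γ μ ν},
    (∫⁻ q, (‖q.2 - q.1‖₊ : ℝ≥0∞) ^ p ∂γ) ^ (1 / p)).toReal

/-- The scaled penalty `φ_t(r) = t·φ(r/t)` for `t > 0`; `φ_0(0) = 0`, `φ_0(r) = ∞` for `r > 0`. -/
def phit (φ : ℝ≥0 → ℝ≥0∞) (t : ℝ) (r : ℝ≥0) : ℝ≥0∞ :=
  if 0 < t then (t.toNNReal : ℝ≥0∞) * φ (r / t.toNNReal) else (if r = 0 then 0 else ∞)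

/-- `φ` is a penalty function: lower semicontinuous, convex, increasing, not constant,
`φ(0) = 0`, and `x ↦ φ(x^{1/p})` is convex. -/
structure IsPenalty (p : ℝ) (φ : ℝ≥0 → ℝ≥0∞) : Prop where
  lsc : LowerSemicontinuous φ
  convex : ∀ a b l m : ℝ≥0, l + m = 1 →
    φ (l * a + m * b) ≤ (l : ℝ≥0∞) * φ a + (m : ℝ≥0∞) * φ b
  mono : Monotone φ
  not_const : ∃ a b, φ a ≠ φ b
  map_zero : φ 0 = 0
  convex_rpow : ∀ a b l m : ℝ≥0, l + m = 1 →
    φ ((l * a + m * b) ^ (1 / p)) ≤ (l : ℝ≥0∞) * φ (a ^ (1 / p)) + (m : ℝ≥0∞) * φ (b ^ (1 / p))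

/-- The convex conjugate `φ*(y) = sup_{x ≥ 0} (xy − φ(x))`. -/
def phiStar (φ : ℝ≥0 → ℝ≥0∞) (y : ℝ≥0) : ℝ≥0∞ :=
  ⨆ x : ℝ≥0, ((x * y : ℝ≥0) : ℝ≥0∞) - φ x

/-- The one-step operator `S(t)f(x) = sup_ν ( ∫ f(x+y) ν(dy) − φ_t(𝒲_p(μ_t, ν)) )`. -/
def Sop {d : ℕ} (p : ℝ) (φ : ℝ≥0 → ℝ≥0∞) (μt : Measure (Ed d)) (t : ℝ)
    (f : Ed d → ℝ) (x : Ed d) : ℝ :=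
  sSup { r : ℝ | ∃ ν : Measure (Ed d), MemPp p ν ∧ ∃ c : ℝ, 0 ≤ c ∧
    phit φ t (Wp p μt ν).toNNReal ≤ ENNReal.ofReal c ∧ r = (∫ y, f (x + y) ∂ν) - c }

/-- The iterated operator `𝒮ⁿ(t) = S(2⁻ⁿ)^{∘ k} ∘ S(t − k·2⁻ⁿ)`, `k = ⌊2ⁿ t⌋`. -/
def SiterN {d : ℕ} (p : ℝ) (φ : ℝ≥0 → ℝ≥0∞) (μ : ℝ → Measure (Ed d)) (n : ℕ) (t : ℝ)
    (f : Ed d → ℝ) : Ed d → ℝ :=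
  (fun g => Sop p φ (μ ((2 : ℝ) ^ n)⁻¹) ((2 : ℝ) ^ n)⁻¹ g)^[⌊(2:ℝ)^n * t⌋₊]
    (Sop p φ (μ (t - ⌊(2:ℝ)^n * t⌋₊ * ((2:ℝ)^n)⁻¹)) (t - ⌊(2:ℝ)^n * t⌋₊ * ((2:ℝ)^n)⁻¹) f)

/-- The limiting operator `𝒮(t)f = lim_n 𝒮ⁿ(t)f` (a decreasing limit, i.e. an infimum). -/
def Slim {d : ℕ} (p : ℝ) (φ : ℝ≥0 → ℝ≥0∞) (μ : ℝ → Measure (Ed d)) (t : ℝ)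
    (f : Ed d → ℝ) (x : Ed d) : ℝ :=
  ⨅ n : ℕ, SiterN p φ μ n t f x

/-- `f ∈ C₀(ℝ^d)`: continuous and vanishing at infinity. -/
def IsC0 {d : ℕ} (f : Ed d → ℝ) : Prop :=
  Continuous f ∧ Tendsto f (cocompact (Ed d)) (𝓝 0)

/-- `(μ_t)_{t ≥ 0}` is a convolution semigroup in `𝒫_p(ℝ^d)`. -/
def IsConvSemigroup {d : ℕ} (p : ℝ) (μ : ℝ → Measure (Ed d)) : Prop :=
  μ 0 = Measure.dirac 0 ∧ (∀ s t : ℝ, 0 ≤ s → 0 ≤ t → μ (s + t) = (μ s).conv (μ t)) ∧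
    ∀ t : ℝ, 0 ≤ t → MemPp p (μ t)

/-- `𝒲_p(μ_t, δ_0) → 0` as `t ↓ 0`. -/
def WContinuousAtZero {d : ℕ} (p : ℝ) (μ : ℝ → Measure (Ed d)) : Prop :=
  Tendsto (fun t => Wp p (μ t) (Measure.dirac 0)) (𝓝[>] (0:ℝ)) (𝓝 0)

/-- The semigroup of the underlying Lévy process, `S^μ(t)f(x) = ∫ f(x+y) μ_t(dy)`. -/
def Smu {d : ℕ} (μ : ℝ → Measure (Ed d)) (t : ℝ) (f : Ed d → ℝ) (x : Ed d) : ℝ :=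
  ∫ y, f (x + y) ∂(μ t)

/-- `f ∈ D(A^μ)` with `A^μ f = Af`: `(S^μ(t)f − f)/t → Af` uniformly as `t ↓ 0`. -/
def HasGenerator {d : ℕ} (μ : ℝ → Measure (Ed d)) (f Af : Ed d → ℝ) : Prop :=
  TendstoUniformly (fun t x => (Smu μ t f x - f x) / t) Af (𝓝[>] (0:ℝ))

/-- `f ∈ C₀¹(ℝ^d)`: continuously differentiable, vanishing at infinity, with gradient
vanishing at infinity. -/
def IsC01 {d : ℕ} (f : Ed d → ℝ) : Prop :=
  IsC0 f ∧ ContDiff ℝ 1 f ∧ Tendsto (fun x => gradient f x) (cocompact (Ed d)) (𝓝 0)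


/-- A test function: `v : (0,∞) → C₀(ℝ^d)` differentiable w.r.t. the supremum norm with
derivative `v'`, and `v(t) ∈ D(A^μ) ∩ C₀¹(ℝ^d)` for all `t > 0`. -/
def IsTestFunction {d : ℕ} (μ : ℝ → Measure (Ed d)) (v v' : ℝ → C₀(Ed d, ℝ)) : Prop :=
  ∀ t : ℝ, 0 < t →
    HasDerivAt v (v' t) t ∧ (∃ Af : Ed d → ℝ, HasGenerator μ (⇑(v t)) Af) ∧ IsC01 (⇑(v t))

/-- `u` is a viscosity subsolution of `∂_t u = A^μ u + φ*(|∇u|)`, `u(0) = f`. -/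
def IsViscositySubsol {d : ℕ} (φ : ℝ≥0 → ℝ≥0∞) (μ : ℝ → Measure (Ed d))
    (f : C₀(Ed d, ℝ)) (u : ℝ → C₀(Ed d, ℝ)) : Prop :=
  ContinuousOn u (Ici 0) ∧ u 0 = f ∧
  ∀ t : ℝ, 0 < t → ∀ x : Ed d, ∀ v v' : ℝ → C₀(Ed d, ℝ), IsTestFunction μ v v' →
    (∀ s : ℝ, 0 < s → ∀ y, u s y ≤ v s y) → v t x = u t x →
    ∀ Av : Ed d → ℝ, HasGenerator μ (⇑(v t)) Av →
      (v' t x : EReal) ≤ (Av x : EReal) + (phiStar φ ‖gradient (⇑(v t)) x‖₊ : EReal)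

/-- `u` is a viscosity supersolution of `∂_t u = A^μ u + φ*(|∇u|)`, `u(0) = f`. -/
def IsViscositySupersol {d : ℕ} (φ : ℝ≥0 → ℝ≥0∞) (μ : ℝ → Measure (Ed d))
    (f : C₀(Ed d, ℝ)) (u : ℝ → C₀(Ed d, ℝ)) : Prop :=
  ContinuousOn u (Ici 0) ∧ u 0 = f ∧
  ∀ t : ℝ, 0 < t → ∀ x : Ed d, ∀ v v' : ℝ → C₀(Ed d, ℝ), IsTestFunction μ v v' →
    (∀ s : ℝ, 0 < s → ∀ y, v s y ≤ u s y) → v t x = u t x →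
    ∀ Av : Ed d → ℝ, HasGenerator μ (⇑(v t)) Av →
      (Av x : EReal) + (phiStar φ ‖gradient (⇑(v t)) x‖₊ : EReal) ≤ (v' t x : EReal)

/-! ### Couplings and the Wasserstein distance -/

/-- The displacement of a coupling. -/
def disp {d : ℕ} (q : Ed d × Ed d) : Ed d := q.2 - q.1

theorem measurable_disp {d : ℕ} : Measurable (disp (d := d)) := by
  unfold disp; fun_prop

theorem eLp_eq {Ω : Type*} [MeasurableSpace Ω] {d : ℕ} {p : ℝ} (hp : 1 < p)
    (γ : Measure Ω) (g : Ω → Ed d) :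
    (∫⁻ q, (‖g q‖₊ : ℝ≥0∞) ^ p ∂γ) ^ (1 / p) = eLpNorm g (ENNReal.ofReal p) γ := by
  have h0 : ENNReal.ofReal p ≠ 0 := by simp; linarith
  rw [eLpNorm_eq_lintegral_rpow_enorm_toReal h0 ENNReal.ofReal_ne_top,
    ENNReal.toReal_ofReal (by linarith)]
  rfl

theorem ofReal_ne_zero_of_one_lt {p : ℝ} (hp : 1 < p) : ENNReal.ofReal p ≠ 0 := by
  simp; linarith

theorem one_le_ofReal_of_one_lt {p : ℝ} (hp : 1 < p) : 1 ≤ ENNReal.ofReal p := by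
  rw [ENNReal.one_le_ofReal]; linarith

theorem Wp_eq {d : ℕ} {p : ℝ} (hp : 1 < p) (μ ν : Measure (Ed d)) :
    Wp p μ ν = (⨅ γ ∈ {γ : Measure (Ed d × Ed d) | IsCoupling γ μ ν},
      eLpNorm disp (ENNReal.ofReal p) γ).toReal := by
  unfold Wp
  simp_rw [← eLp_eq hp]
  rfl

theorem memPp_iff {d : ℕ} {p : ℝ} (hp : 1 < p) (μ : Measure (Ed d)) :
    MemPp p μ ↔ IsProbabilityMeasure μ ∧ MemLp (fun x : Ed d => x) (ENNReal.ofReal p) μ := by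
  unfold MemPp
  refine and_congr_right fun _ => ?_
  have hm : AEStronglyMeasurable (fun x : Ed d => x) μ := aestronglyMeasurable_id
  have hp0 : 0 < p := by linarith
  rw [MemLp, ← eLp_eq hp]
  simp only [hm, true_and]
  rw [ENNReal.rpow_lt_top_iff_of_pos (by positivity)]

theorem coupling_prob {d : ℕ} {γ : Measure (Ed d × Ed d)} {μ ν : Measure (Ed d)}
    [IsProbabilityMeasure μ] (h : IsCoupling γ μ ν) : IsProbabilityMeasure γ := by
  constructor
  have := h.1
  have h2 : γ.map Prod.fst univ = μ univ := by rw [this]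
  rw [Measure.map_apply measurable_fst MeasurableSet.univ] at h2
  simpa using h2

theorem disp_memLp {d : ℕ} {p : ℝ} (hp : 1 < p) {γ : Measure (Ed d × Ed d)} {μ ν : Measure (Ed d)}
    (hμ : MemPp p μ) (hν : MemPp p ν) (h : IsCoupling γ μ ν) :
    MemLp disp (ENNReal.ofReal p) γ := by
  have h1 := ((memPp_iff hp μ).1 hμ).2
  have h2 := ((memPp_iff hp ν).1 hν).2
  rw [← h.1] at h1
  rw [← h.2] at h2
  have h1' := h1.comp_of_map measurable_fst.aemeasurable
  have h2' := h2.comp_of_map measurable_snd.aemeasurable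
  exact h2'.sub h1'

theorem coupling_prod {d : ℕ} (μ ν : Measure (Ed d)) [IsProbabilityMeasure μ]
    [IsProbabilityMeasure ν] : IsCoupling (μ.prod ν) μ ν := by
  constructor
  · simp
  · simp

theorem Winf_lt_top {d : ℕ} {p : ℝ} (hp : 1 < p) {μ ν : Measure (Ed d)}
    (hμ : MemPp p μ) (hν : MemPp p ν) :
    (⨅ γ ∈ {γ : Measure (Ed d × Ed d) | IsCoupling γ μ ν},
      eLpNorm disp (ENNReal.ofReal p) γ) < ∞ := by
  have := hμ.1
  have := hν.1
  exact lt_of_le_of_lt (iInf₂_le (μ.prod ν) (coupling_prod μ ν))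
    (disp_memLp hp hμ hν (coupling_prod μ ν)).2

theorem Wp_nonneg {d : ℕ} {p : ℝ} (μ ν : Measure (Ed d)) : 0 ≤ Wp p μ ν :=
  ENNReal.toReal_nonneg

theorem exists_coupling {d : ℕ} {p : ℝ} (hp : 1 < p) {μ ν : Measure (Ed d)}
    (hμ : MemPp p μ) (hν : MemPp p ν) {s : ℝ} (hs : Wp p μ ν < s) :
    ∃ γ, IsCoupling γ μ ν ∧ eLpNorm disp (ENNReal.ofReal p) γ < ENNReal.ofReal s := by
  rw [Wp_eq hp] at hs
  have h1 := (ENNReal.lt_ofReal_iff_toReal_lt (Winf_lt_top hp hμ hν).ne).2 hs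
  simp only [iInf_lt_iff] at h1
  obtain ⟨γ, hγ, h⟩ := h1
  exact ⟨γ, hγ, h⟩

theorem Wp_le {d : ℕ} {p : ℝ} (hp : 1 < p) {μ ν : Measure (Ed d)}
    {γ : Measure (Ed d × Ed d)} (hγ : IsCoupling γ μ ν) {s : ℝ} (hs : 0 ≤ s)
    (h : eLpNorm disp (ENNReal.ofReal p) γ ≤ ENNReal.ofReal s) : Wp p μ ν ≤ s := by
  rw [Wp_eq hp]
  exact ENNReal.toReal_le_of_le_ofReal hs
    ((iInf₂_le (f := fun γ (_ : γ ∈ {γ : Measure (Ed d × Ed d) | IsCoupling γ μ ν}) =>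
      eLpNorm disp (ENNReal.ofReal p) γ) γ hγ).trans h)

/-- shift coupling -/
theorem Wp_shift {d : ℕ} {p : ℝ} (hp : 1 < p) {μ : Measure (Ed d)} (hμ : MemPp p μ) (b : Ed d) :
    MemPp p (μ.map (fun y => y + b)) ∧ Wp p μ (μ.map (fun y => y + b)) ≤ ‖b‖ := by
  have := hμ.1
  have hm : Measurable (fun y : Ed d => y + b) := by fun_prop
  constructor
  · rw [memPp_iff hp]
    refine ⟨Measure.isProbabilityMeasure_map hm.aemeasurable, ?_⟩
    rw [memLp_map_measure_iff (g := fun x : Ed d => x) aestronglyMeasurable_id hm.aemeasurable]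
    exact ((memPp_iff hp μ).1 hμ).2.add (memLp_const b)
  · have hm2 : Measurable (fun y : Ed d => (y, y + b)) := by fun_prop
    refine Wp_le hp (γ := μ.map (fun y => (y, y + b))) ⟨?_, ?_⟩ (norm_nonneg b) ?_
    · rw [Measure.map_map measurable_fst hm2]
      exact Measure.map_id
    · rw [Measure.map_map measurable_snd hm2]
      rfl
    · rw [eLpNorm_map_measure measurable_disp.aestronglyMeasurable hm2.aemeasurable]
      have : (disp ∘ fun y : Ed d => (y, y + b)) = fun _ => b := by
        funext y; simp [disp]
      rw [this, eLpNorm_const _ (ofReal_ne_zero_of_one_lt hp) (NeZero.ne _)]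
      simp

theorem Wp_self {d : ℕ} {p : ℝ} (hp : 1 < p) {μ : Measure (Ed d)} (hμ : MemPp p μ) :
    Wp p μ μ = 0 := by
  have := (Wp_shift hp hμ 0).2
  simp at this
  exact le_antisymm this (Wp_nonneg _ _)

/-- A function bounded and continuous. -/
theorem integrable_bdd {d : ℕ} {ν : Measure (Ed d)} [IsProbabilityMeasure ν] {f : Ed d → ℝ} {M : ℝ}
    (hf : Continuous f) (hM : ∀ x, |f x| ≤ M) (x : Ed d) : Integrable (fun y => f (x + y)) ν := by
  refine Integrable.of_bound (C := M) (by fun_prop : Continuous _).aestronglyMeasurable ?_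
  exact Eventually.of_forall fun y => hM _

/-- Main coupling estimate. -/
theorem coupling_bound {d : ℕ} {p : ℝ} (hp : 1 < p) {μ ν : Measure (Ed d)}
    (hμ : MemPp p μ) (hν : MemPp p ν) {f G : Ed d → ℝ} {M M' C D : ℝ} (hC : 0 ≤ C) (hD : 0 ≤ D)
    (hf : Continuous f) (hfM : ∀ x, |f x| ≤ M) (hG : Continuous G) (hGM : ∀ x, |G x| ≤ M')
    (h : ∀ a b, f b ≤ G a + C * ‖b - a‖ + D * ‖b - a‖ ^ p) (x : Ed d) :
    ∫ z, f (x + z) ∂ν ≤ (∫ y, G (x + y) ∂μ) + C * Wp p μ ν + D * Wp p μ ν ^ p := by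
  have := hμ.1
  have := hν.1
  have hp0 : 0 < p := by linarith
  have key : ∀ s, Wp p μ ν < s →
      ∫ z, f (x + z) ∂ν ≤ (∫ y, G (x + y) ∂μ) + C * s + D * s ^ p := by
    intro s hs
    have hs0 : 0 < s := lt_of_le_of_lt (Wp_nonneg _ _) hs
    obtain ⟨γ, hγ, hγs⟩ := exists_coupling hp hμ hν hs
    have := coupling_prob hγ
    have hL := disp_memLp hp hμ hν hγ
    have e1 : ∫ z, f (x + z) ∂ν = ∫ q, f (x + q.2) ∂γ := by
      rw [← hγ.2, integral_map measurable_snd.aemeasurable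
        (by fun_prop : Continuous fun z => f (x + z)).aestronglyMeasurable]
    have e2 : ∫ z, G (x + z) ∂μ = ∫ q, G (x + q.1) ∂γ := by
      rw [← hγ.1, integral_map measurable_fst.aemeasurable
        (by fun_prop : Continuous fun z => G (x + z)).aestronglyMeasurable]
    have i1 : Integrable (fun q : Ed d × Ed d => f (x + q.2)) γ :=
      Integrable.of_bound (C := M)
        (by fun_prop : Continuous fun q : Ed d × Ed d => f (x + q.2)).aestronglyMeasurable
        (Eventually.of_forall fun y => hfM _)
    have i2 : Integrable (fun q : Ed d × Ed d => G (x + q.1)) γ :=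
      Integrable.of_bound (C := M')
        (by fun_prop : Continuous fun q : Ed d × Ed d => G (x + q.1)).aestronglyMeasurable
        (Eventually.of_forall fun y => hGM _)
    have i3 : Integrable (fun q : Ed d × Ed d => ‖disp q‖) γ :=
      (hL.integrable (one_le_ofReal_of_one_lt hp)).norm
    have i4 : Integrable (fun q : Ed d × Ed d => ‖disp q‖ ^ p) γ := by
      have := hL.integrable_norm_rpow (ofReal_ne_zero_of_one_lt hp) ENNReal.ofReal_ne_top
      rwa [ENNReal.toReal_ofReal hp0.le] at this
    have b3 : ∫ q, ‖disp q‖ ∂γ ≤ s := by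
      have h1 := eLpNorm_le_eLpNorm_of_exponent_le (μ := γ) (one_le_ofReal_of_one_lt hp)
        hL.1
      have h2 := h1.trans hγs.le
      rw [eLpNorm_one_eq_lintegral_enorm] at h2
      rw [integral_norm_eq_lintegral_enorm hL.1]
      exact ENNReal.toReal_le_of_le_ofReal hs0.le h2
    have b4 : ∫ q, ‖disp q‖ ^ p ∂γ ≤ s ^ p := by
      have h1 := hL.eLpNorm_eq_integral_rpow_norm (ofReal_ne_zero_of_one_lt hp)
        ENNReal.ofReal_ne_top
      rw [ENNReal.toReal_ofReal hp0.le] at h1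
      have h2 := h1 ▸ hγs.le
      rw [ENNReal.ofReal_le_ofReal_iff hs0.le] at h2
      have hn : 0 ≤ ∫ q, ‖disp q‖ ^ p ∂γ := integral_nonneg fun q => by positivity
      have := Real.rpow_le_rpow (by positivity) h2 hp0.le
      rwa [Real.rpow_inv_rpow hn hp0.ne'] at this
    have i5 : Integrable (fun q : Ed d × Ed d => G (x + q.1) + C * ‖disp q‖) γ :=
      i2.add (i3.const_mul C)
    have mono : ∫ q, f (x + q.2) ∂γ ≤
        ∫ q, ((G (x + q.1) + C * ‖disp q‖) + D * ‖disp q‖ ^ p) ∂γ := by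
      refine integral_mono i1 (i5.add (i4.const_mul D)) fun q => ?_
      have := h (x + q.1) (x + q.2)
      have e : (x + q.2) - (x + q.1) = disp q := by simp [disp]
      rw [e] at this
      exact this
    rw [integral_add i5 (i4.const_mul D),
      integral_add i2 (i3.const_mul C), integral_const_mul, integral_const_mul] at mono
    rw [e1, e2]
    have := mul_le_mul_of_nonneg_left b3 hC
    have := mul_le_mul_of_nonneg_left b4 hD
    linarith
  have hcont : Continuous fun s : ℝ => (∫ y, G (x + y) ∂μ) + C * s + D * s ^ p := by
    have : Continuous fun s : ℝ => s ^ p := Real.continuous_rpow_const hp0.le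
    fun_prop
  have ht : Tendsto (fun s : ℝ => (∫ y, G (x + y) ∂μ) + C * s + D * s ^ p) (𝓝[>] (Wp p μ ν))
      (𝓝 ((∫ y, G (x + y) ∂μ) + C * Wp p μ ν + D * Wp p μ ν ^ p)) :=
    (hcont.tendsto _).mono_left nhdsWithin_le_nhds
  exact ge_of_tendsto ht (eventually_nhdsWithin_of_forall fun s hs => key s hs)

/-! ### Penalty functions -/

/-- `c` is an admissible (real) bound for the penalty at real radius `r`. -/
def Pen (φ : ℝ≥0 → ℝ≥0∞) (r c : ℝ) : Prop := φ r.toNNReal ≤ ENNReal.ofReal c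

theorem phit_pos_iff {φ : ℝ≥0 → ℝ≥0∞} {t : ℝ} (ht : 0 < t) {W c : ℝ} :
    phit φ t W.toNNReal ≤ ENNReal.ofReal c ↔ Pen φ (W / t) (c / t) := by
  unfold phit Pen
  rw [if_pos ht]
  have e1 : W.toNNReal / t.toNNReal = (W / t).toNNReal := by
    rw [Real.toNNReal_div' ht.le]
  have e2 : ENNReal.ofReal (c / t) = ENNReal.ofReal c / ENNReal.ofReal t :=
    ENNReal.ofReal_div_of_pos ht
  rw [e1, e2, ENNReal.le_div_iff_mul_le (Or.inl (by simpa using ht)) (Or.inl ENNReal.ofReal_ne_top),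
    mul_comm]
  rfl

theorem Pen_mono {p : ℝ} {φ : ℝ≥0 → ℝ≥0∞} (hφ : IsPenalty p φ) {r r' c c' : ℝ} (hr : r' ≤ r)
    (hc : c ≤ c') (h : Pen φ r c) : Pen φ r' c' :=
  (hφ.mono (Real.toNNReal_le_toNNReal hr)).trans (h.trans (ENNReal.ofReal_le_ofReal hc))

theorem Pen_convex {p : ℝ} {φ : ℝ≥0 → ℝ≥0∞} (hφ : IsPenalty p φ) {a b c1 c2 l m : ℝ}
    (ha : 0 ≤ a) (hb : 0 ≤ b) (hc1 : 0 ≤ c1) (hc2 : 0 ≤ c2) (hl : 0 ≤ l) (hm : 0 ≤ m)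
    (hlm : l + m = 1) (h1 : Pen φ a c1) (h2 : Pen φ b c2) :
    Pen φ (l * a + m * b) (l * c1 + m * c2) := by
  unfold Pen at *
  have := hφ.convex a.toNNReal b.toNNReal l.toNNReal m.toNNReal (by
    rw [← Real.toNNReal_add hl hm, hlm, Real.toNNReal_one])
  rw [Real.toNNReal_add (by positivity) (by positivity), Real.toNNReal_mul hl,
    Real.toNNReal_mul hm, ENNReal.ofReal_add (by positivity) (by positivity),
    ENNReal.ofReal_mul hl, ENNReal.ofReal_mul hm]
  refine this.trans ?_
  gcongr <;> rfl

/-- epigraph of `x ↦ φ(x^{1/p})` -/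
def epi (p : ℝ) (φ : ℝ≥0 → ℝ≥0∞) : Set (ℝ × ℝ) :=
  {z | 0 ≤ z.1 ∧ 0 ≤ z.2 ∧ Pen φ (z.1 ^ (1 / p)) z.2}

theorem epi_convex {p : ℝ} {φ : ℝ≥0 → ℝ≥0∞} (hφ : IsPenalty p φ) : Convex ℝ (epi p φ) := by
  rintro ⟨a, c1⟩ ⟨ha, hc1, h1⟩ ⟨b, c2⟩ ⟨hb, hc2, h2⟩ l m hl hm hlm
  simp only at ha hc1 h1 hb hc2 h2
  refine ⟨by simp; positivity, by simp; positivity, ?_⟩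
  simp only [Prod.smul_mk, smul_eq_mul, Prod.mk_add_mk]
  unfold Pen at *
  have := hφ.convex_rpow a.toNNReal b.toNNReal l.toNNReal m.toNNReal (by
    rw [← Real.toNNReal_add hl hm, hlm, Real.toNNReal_one])
  have e : ∀ x : ℝ, 0 ≤ x → (x ^ (1 / p)).toNNReal = x.toNNReal ^ (1 / p) := fun x hx =>
    Real.toNNReal_rpow_of_nonneg hx
  rw [e _ ha] at h1
  rw [e _ hb] at h2
  rw [e _ (by positivity), Real.toNNReal_add (by positivity) (by positivity), Real.toNNReal_mul hl,
    Real.toNNReal_mul hm, ENNReal.ofReal_add (by positivity) (by positivity),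
    ENNReal.ofReal_mul hl, ENNReal.ofReal_mul hm]
  refine this.trans ?_
  gcongr <;> rfl

theorem epi_closed {p : ℝ} (hp : 1 < p) {φ : ℝ≥0 → ℝ≥0∞} (hφ : IsPenalty p φ) :
    IsClosed (epi p φ) := by
  have hcl : IsClosed {z : ℝ≥0 × ℝ≥0∞ | φ z.1 ≤ z.2} := hφ.lsc.isClosed_epigraph
  have hcont : Continuous fun z : ℝ × ℝ => ((z.1 ^ (1 / p)).toNNReal, ENNReal.ofReal z.2) := by
    have h1 : Continuous fun s : ℝ => s ^ (1 / p) :=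
      Real.continuous_rpow_const (by positivity)
    exact (continuous_real_toNNReal.comp (h1.comp continuous_fst)).prodMk
      (ENNReal.continuous_ofReal.comp continuous_snd)
  have h3 := hcl.preimage hcont
  have : epi p φ = ({z | 0 ≤ z.1} ∩ {z | 0 ≤ z.2}) ∩
      ((fun z : ℝ × ℝ => ((z.1 ^ (1 / p)).toNNReal, ENNReal.ofReal z.2)) ⁻¹'
        {z : ℝ≥0 × ℝ≥0∞ | φ z.1 ≤ z.2}) := by
    ext z; simp [epi, Pen, and_assoc]
  rw [this]
  exact ((isClosed_le continuous_const continuous_fst).inter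
    (isClosed_le continuous_const continuous_snd)).inter h3

theorem Pen_jensen {p : ℝ} (hp : 1 < p) {φ : ℝ≥0 → ℝ≥0∞} (hφ : IsPenalty p φ)
    {Ω : Type*} [MeasurableSpace Ω] (P : Measure Ω) [IsProbabilityMeasure P] {W c : Ω → ℝ}
    (hW : ∀ ω, 0 ≤ W ω) (hc : ∀ ω, 0 ≤ c ω) (h : ∀ ω, Pen φ (W ω) (c ω))
    (hWi : Integrable (fun ω => W ω ^ p) P) (hci : Integrable c P) :
    Pen φ ((∫ ω, W ω ^ p ∂P) ^ (1 / p)) (∫ ω, c ω ∂P) := by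
  have hp0 : 0 < p := by linarith
  have := (epi_convex hφ).integral_mem (epi_closed hp hφ) (μ := P)
    (f := fun ω => (W ω ^ p, c ω)) (Eventually.of_forall fun ω => ⟨by
      have := hW ω; positivity, hc ω, by
      simp only [one_div]
      rw [Real.rpow_rpow_inv (hW ω) hp0.ne']; exact h ω⟩) (hWi.prodMk hci)
  rw [integral_pair hWi hci] at this
  exact this.2.2

theorem Pen_growth {p : ℝ} (hp : 1 < p) {φ : ℝ≥0 → ℝ≥0∞} (hφ : IsPenalty p φ) :
    ∃ α β : ℝ, 0 < α ∧ 0 ≤ β ∧ ∀ r c : ℝ, 0 ≤ r → 0 ≤ c → Pen φ r c → α * r ^ p - β ≤ c := by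
  have hp0 : 0 < p := by linarith
  obtain ⟨r1, hr1⟩ : ∃ r1, φ r1 ≠ 0 := by
    by_contra! hcon
    obtain ⟨a, b, hab⟩ := hφ.not_const
    exact hab (by rw [hcon, hcon])
  have hr1pos : 0 < r1 := pos_iff_ne_zero.2 fun h => hr1 (by rw [h, hφ.map_zero])
  -- a positive lower bound
  obtain ⟨A, hA0, hA⟩ : ∃ A : ℝ, 0 < A ∧ ENNReal.ofReal A ≤ φ r1 := by
    obtain ⟨q, hq0, hq⟩ := ENNReal.lt_iff_exists_nnreal_btwn.1 (pos_iff_ne_zero.2 hr1)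
    refine ⟨q, by exact_mod_cast hq0, ?_⟩
    rw [ENNReal.ofReal_coe_nnreal]; exact hq.le
  have hr1p : (0 : ℝ) < (r1 : ℝ) ^ p := by positivity
  refine ⟨A / (r1 : ℝ) ^ p, A, by positivity, hA0.le, fun r c hr hc h => ?_⟩
  rcases le_total r (r1 : ℝ) with hle | hle
  · have : r ^ p ≤ (r1 : ℝ) ^ p := Real.rpow_le_rpow hr hle hp0.le
    have : A / (r1 : ℝ) ^ p * r ^ p ≤ A := by
      rw [div_mul_eq_mul_div, div_le_iff₀ hr1p]; gcongr
    linarith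
  · have hrpos : 0 < r := lt_of_lt_of_le (by exact_mod_cast hr1pos) hle
    have hrp : 0 < r ^ p := by positivity
    have hx : (r1 : ℝ) ^ p ≤ r ^ p := Real.rpow_le_rpow (by positivity) hle hp0.le
    have hz : ((0, 0) : ℝ × ℝ) ∈ epi p φ := by
      refine ⟨le_rfl, le_rfl, ?_⟩
      simp [Pen, Real.zero_rpow, hp0.ne', hφ.map_zero]
    have hy : ((r ^ p, c) : ℝ × ℝ) ∈ epi p φ := by
      refine ⟨hrp.le, hc, ?_⟩
      simp only [one_div]
      rw [Real.rpow_rpow_inv hr hp0.ne']; exact h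
    have hl : 0 ≤ (r1 : ℝ) ^ p / r ^ p := by positivity
    have hl1 : (r1 : ℝ) ^ p / r ^ p ≤ 1 := (div_le_one hrp).2 hx
    have := epi_convex hφ hy hz hl (sub_nonneg.2 hl1) (by ring)
    have h3 := this.2.2
    simp only [Prod.smul_mk, smul_eq_mul, Prod.mk_add_mk, mul_zero, add_zero] at h3
    rw [div_mul_cancel₀ _ hrp.ne', one_div, Real.rpow_rpow_inv (by positivity) hp0.ne'] at h3
    unfold Pen at h3
    rw [Real.toNNReal_coe] at h3
    have h4 := hA.trans h3
    rw [ENNReal.ofReal_le_ofReal_iff (by positivity)] at h4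
    have : A / (r1 : ℝ) ^ p * r ^ p ≤ c := by
      rw [div_mul_eq_mul_div, div_le_iff₀ hr1p]
      rw [div_mul_eq_mul_div, le_div_iff₀ hrp] at h4
      linarith
    linarith

/-- superlinear domination -/
theorem rpow_dominates {p : ℝ} (hp : 1 < p) (K : ℝ) {ε : ℝ} (hε : 0 < ε) :
    ∃ R : ℝ, 1 ≤ R ∧ ∀ r, R ≤ r → K * r ≤ ε * r ^ p := by
  have h := (_root_.tendsto_rpow_atTop (by linarith : 0 < p - 1)).eventually_ge_atTop (K / ε)
  obtain ⟨R, hR⟩ := eventually_atTop.1 h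
  refine ⟨max R 1, le_max_right _ _, fun r hr => ?_⟩
  have hr1 : 0 < r := lt_of_lt_of_le one_pos ((le_max_right _ _).trans hr)
  have h1 := hR r ((le_max_left _ _).trans hr)
  rw [div_le_iff₀ hε] at h1
  have e : r ^ p = r ^ (p - 1) * r := by
    rw [Real.rpow_sub hr1, Real.rpow_one, div_mul_cancel₀ _ hr1.ne']
  rw [e]
  nlinarith

/-- The conjugate is finite and robust. -/
theorem phiStar_facts {p : ℝ} (hp : 1 < p) {φ : ℝ≥0 → ℝ≥0∞} (hφ : IsPenalty p φ) (c : ℝ≥0) :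
    ∃ Φ R ε₀ : ℝ, 0 ≤ Φ ∧ 0 ≤ R ∧ 0 < ε₀ ∧ phiStar φ c = ENNReal.ofReal Φ ∧
      ∀ ε, 0 ≤ ε → ε ≤ ε₀ → ∀ r k : ℝ, 0 ≤ r → 0 ≤ k → Pen φ r k →
        (c + ε) * r + ε * r ^ p - k ≤ Φ + ε * (R + R ^ p) := by
  have hp0 : 0 < p := by linarith
  obtain ⟨α, β, hα, hβ, hgr⟩ := Pen_growth hp hφ
  obtain ⟨R, hR1, hR⟩ := rpow_dominates hp ((c : ℝ) + 1 + β) (half_pos hα)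
  have hR0 : 0 ≤ R := by linarith
  have big : ∀ ε, 0 ≤ ε → ε ≤ min (α / 2) 1 → ∀ r k : ℝ, R ≤ r → 0 ≤ k → Pen φ r k →
      (c + ε) * r + ε * r ^ p - k ≤ 0 := by
    intro ε h0 h1 r k hr hk hP
    have hr0 : 1 ≤ r := by linarith
    have a1 := hgr r k (by linarith) hk hP
    have a2 := hR r hr
    have hrp : 0 ≤ r ^ p := by positivity
    have a3 : ε * r ^ p ≤ α / 2 * r ^ p :=
      mul_le_mul_of_nonneg_right (h1.trans (min_le_left _ _)) hrp
    have a4 : (c + ε) * r ≤ (c + 1) * r := by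
      have := h1.trans (min_le_right _ _)
      gcongr
    have a5 : β ≤ β * r := by nlinarith
    nlinarith
  have hfin : phiStar φ c ≤ ENNReal.ofReal (c * R) := by
    unfold phiStar
    refine iSup_le fun x => ?_
    rw [tsub_le_iff_right]
    by_cases hx : (x : ℝ) ≤ R
    · refine le_add_right ?_
      rw [← ENNReal.ofReal_coe_nnreal]
      apply ENNReal.ofReal_le_ofReal
      push_cast
      nlinarith [c.2, mul_le_mul_of_nonneg_left hx c.2]
    · refine le_add_left ?_
      by_cases hx2 : φ x = ∞
      · rw [hx2]; exact le_top
      have hP : Pen φ x (φ x).toReal := by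
        unfold Pen
        rw [Real.toNNReal_coe, ENNReal.ofReal_toReal hx2]
      have := big 0 le_rfl (by positivity) x _ (by linarith) ENNReal.toReal_nonneg hP
      rw [← ENNReal.ofReal_toReal hx2, ← ENNReal.ofReal_coe_nnreal]
      apply ENNReal.ofReal_le_ofReal
      push_cast
      linarith
  have hne : phiStar φ c ≠ ∞ := (hfin.trans_lt ENNReal.ofReal_lt_top).ne
  have fy : ∀ r k : ℝ, 0 ≤ r → 0 ≤ k → Pen φ r k → c * r - k ≤ (phiStar φ c).toReal := by
    intro r k hr hk hP
    have h1 : ((r.toNNReal * c : ℝ≥0) : ℝ≥0∞) - φ r.toNNReal ≤ phiStar φ c := by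
      unfold phiStar
      exact le_iSup (fun x : ℝ≥0 => ((x * c : ℝ≥0) : ℝ≥0∞) - φ x) r.toNNReal
    rw [tsub_le_iff_right] at h1
    have h2 := h1.trans (add_le_add_right hP _)
    rw [← ENNReal.ofReal_toReal hne, ← ENNReal.ofReal_add ENNReal.toReal_nonneg hk,
      ← ENNReal.ofReal_coe_nnreal, ENNReal.ofReal_le_ofReal_iff (by positivity)] at h2
    push_cast at h2
    rw [Real.coe_toNNReal r hr] at h2
    linarith
  refine ⟨(phiStar φ c).toReal, R, min (α / 2) 1, ENNReal.toReal_nonneg, hR0, by positivity,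
    (ENNReal.ofReal_toReal hne).symm, fun ε h0 h1 r k hr hk hP => ?_⟩
  have hΦ : 0 ≤ (phiStar φ c).toReal := ENNReal.toReal_nonneg
  rcases le_total R r with h | h
  · have := big ε h0 h1 r k h hk hP
    have : 0 ≤ ε * (R + R ^ p) := by positivity
    linarith
  · have h2 := fy r k hr hk hP
    have h3 : r ^ p ≤ R ^ p := Real.rpow_le_rpow hr h hp0.le
    have : ε * (r + r ^ p) ≤ ε * (R + R ^ p) := by gcongr
    nlinarith

/-! ### The one-step operator -/

/-- affine modulus of continuity -/
def HasMod {d : ℕ} (f : Ed d → ℝ) (ε C : ℝ) : Prop := ∀ a b, f b ≤ f a + ε + C * ‖b - a‖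

/-- bounded uniformly continuous functions -/
structure BUC {d : ℕ} (f : Ed d → ℝ) : Prop where
  bdd : ∃ M, ∀ x, |f x| ≤ M
  mod : ∀ ε > 0, ∃ C, 0 ≤ C ∧ HasMod f ε C

theorem BUC.cont {d : ℕ} {f : Ed d → ℝ} (h : BUC f) : Continuous f := by
  rw [Metric.continuous_iff]
  intro b ε hε
  obtain ⟨C, hC, hm⟩ := h.mod (ε / 2) (half_pos hε)
  refine ⟨ε / 2 / (C + 1), by positivity, fun a ha => ?_⟩
  rw [dist_eq_norm, lt_div_iff₀ (by positivity)] at ha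
  rw [Real.dist_eq, abs_lt]
  have h1 := hm a b
  have h2 := hm b a
  rw [norm_sub_rev] at h1
  have := norm_nonneg (a - b)
  constructor <;> nlinarith

theorem BUC.integrable {d : ℕ} {f : Ed d → ℝ} (h : BUC f) {ν : Measure (Ed d)}
    [IsProbabilityMeasure ν] (x : Ed d) : Integrable (fun y => f (x + y)) ν := by
  obtain ⟨M, hM⟩ := h.bdd
  exact integrable_bdd h.cont hM x

theorem BUC.neg {d : ℕ} {f : Ed d → ℝ} (h : BUC f) : BUC (fun x => - f x) := by
  refine ⟨?_, fun ε hε => ?_⟩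
  · obtain ⟨M, hM⟩ := h.bdd
    exact ⟨M, fun x => by simpa using hM x⟩
  · obtain ⟨C, hC, hm⟩ := h.mod ε hε
    refine ⟨C, hC, fun a b => ?_⟩
    have := hm b a
    rw [norm_sub_rev]
    linarith

theorem BUC.of_uniform {d : ℕ} {f : Ed d → ℝ} {M : ℝ} (hM : ∀ x, |f x| ≤ M)
    (hu : UniformContinuous f) : BUC f := by
  refine ⟨⟨M, hM⟩, fun ε hε => ?_⟩
  obtain ⟨δ, hδ, h⟩ := Metric.uniformContinuous_iff.1 hu ε hε
  have hM0 : 0 ≤ M := (abs_nonneg _).trans (hM 0)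
  refine ⟨2 * M / δ, by positivity, fun a b => ?_⟩
  by_cases hab : ‖b - a‖ < δ
  · have := h (a := b) (b := a) (by rwa [dist_eq_norm])
    rw [Real.dist_eq, abs_lt] at this
    have : 0 ≤ 2 * M / δ * ‖b - a‖ := by positivity
    linarith
  · have h1 : 2 * M ≤ 2 * M / δ * ‖b - a‖ := by
      rw [div_mul_eq_mul_div, le_div_iff₀ hδ]
      gcongr
      exact not_lt.1 hab
    have := abs_le.1 (hM a)
    have := abs_le.1 (hM b)
    linarith

theorem C0_bdd {d : ℕ} {f : Ed d → ℝ} (h : IsC0 f) : ∃ M, 0 ≤ M ∧ ∀ x, |f x| ≤ M := by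
  let F : C₀(Ed d, ℝ) := ⟨⟨f, h.1⟩, h.2⟩
  refine ⟨‖F.toBCF‖, norm_nonneg _, fun x => ?_⟩
  exact F.toBCF.norm_coe_le_norm x

theorem IsC0.buc {d : ℕ} {f : Ed d → ℝ} (h : IsC0 f) : BUC f := by
  obtain ⟨M, _, hM⟩ := C0_bdd h
  let F : C₀(Ed d, ℝ) := ⟨⟨f, h.1⟩, h.2⟩
  exact BUC.of_uniform hM (ZeroAtInftyContinuousMap.uniformContinuous F)

theorem IsC0.coe {d : ℕ} (f : C₀(Ed d, ℝ)) : IsC0 (f : Ed d → ℝ) :=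
  ⟨f.continuous, f.zero_at_infty'⟩

theorem phit_zero {p : ℝ} {φ : ℝ≥0 → ℝ≥0∞} (hφ : IsPenalty p φ) (t : ℝ) : phit φ t 0 = 0 := by
  unfold phit
  by_cases h : 0 < t <;> simp [h, hφ.map_zero]

section
variable {d : ℕ} {p : ℝ} {φ : ℝ≥0 → ℝ≥0∞} {m : Measure (Ed d)} {t : ℝ}

theorem Sop_le (hp : 1 < p) (hφ : IsPenalty p φ) (hm : MemPp p m) {f : Ed d → ℝ} {x : Ed d} {A : ℝ}
    (h : ∀ ν c, MemPp p ν → 0 ≤ c → phit φ t (Wp p m ν).toNNReal ≤ ENNReal.ofReal c →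
      (∫ y, f (x + y) ∂ν) - c ≤ A) : Sop p φ m t f x ≤ A := by
  refine csSup_le ⟨_, m, hm, 0, le_rfl, ?_, rfl⟩ ?_
  · rw [Wp_self hp hm]; simp [phit_zero hφ]
  · rintro r ⟨ν, hν, c, hc, hpen, rfl⟩
    exact h ν c hν hc hpen

theorem le_Sop {f : Ed d → ℝ} {M : ℝ} (hM : ∀ x, |f x| ≤ M) {x : Ed d}
    {ν : Measure (Ed d)} {c : ℝ} (hν : MemPp p ν) (hc : 0 ≤ c)
    (hpen : phit φ t (Wp p m ν).toNNReal ≤ ENNReal.ofReal c) :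
    (∫ y, f (x + y) ∂ν) - c ≤ Sop p φ m t f x := by
  refine le_csSup ⟨M, ?_⟩ ⟨ν, hν, c, hc, hpen, rfl⟩
  rintro r ⟨ν, hν, c, hc, hpen, rfl⟩
  have := hν.1
  have h1 : ‖∫ y, f (x + y) ∂ν‖ ≤ M * ν.real univ :=
    norm_integral_le_of_norm_le_const (Eventually.of_forall fun y => hM _)
  simp at h1
  have := (abs_le.1 h1).2
  linarith

theorem Sop_near (hp : 1 < p) (hφ : IsPenalty p φ) (hm : MemPp p m) (f : Ed d → ℝ)
    (x : Ed d) {ε : ℝ} (hε : 0 < ε) : ∃ ν c, MemPp p ν ∧ 0 ≤ c ∧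
      phit φ t (Wp p m ν).toNNReal ≤ ENNReal.ofReal c ∧
      Sop p φ m t f x ≤ (∫ y, f (x + y) ∂ν) - c + ε := by
  by_contra! hcon
  have : Sop p φ m t f x ≤ Sop p φ m t f x - ε :=
    Sop_le hp hφ hm fun ν c hν hc hpen => by
      have := hcon ν c hν hc hpen
      linarith
  linarith

theorem Sop_nonexp (hp : 1 < p) (hφ : IsPenalty p φ) (hm : MemPp p m) {f g : Ed d → ℝ}
    (hf : BUC f) (hg : BUC g) {x x' : Ed d} {k : ℝ} (h : ∀ y, f (x' + y) ≤ g (x + y) + k) :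
    Sop p φ m t f x' ≤ Sop p φ m t g x + k := by
  obtain ⟨M, hM⟩ := hg.bdd
  refine Sop_le hp hφ hm fun ν c hν hc hpen => ?_
  have := hν.1
  have h1 := le_Sop (x := x) hM hν hc hpen
  have h2 : ∫ y, f (x' + y) ∂ν ≤ ∫ y, (g (x + y) + k) ∂ν :=
    integral_mono (hf.integrable x') ((hg.integrable x).add (integrable_const k)) h
  rw [integral_add (hg.integrable x) (integrable_const k)] at h2
  simp at h2
  linarith

theorem Sop_mono (hp : 1 < p) (hφ : IsPenalty p φ) (hm : MemPp p m) {f g : Ed d → ℝ}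
    (hf : BUC f) (hg : BUC g) (h : ∀ y, f y ≤ g y) (x : Ed d) :
    Sop p φ m t f x ≤ Sop p φ m t g x := by
  have := Sop_nonexp (t := t) (x := x) (x' := x) (k := 0) hp hφ hm hf hg
    (fun y => by simpa using h _)
  simpa using this

theorem Sop_mod (hp : 1 < p) (hφ : IsPenalty p φ) (hm : MemPp p m) {f : Ed d → ℝ}
    (hf : BUC f) {ε C : ℝ} (h : HasMod f ε C) : HasMod (Sop p φ m t f) ε C := by
  intro a b
  have := Sop_nonexp (t := t) (x := a) (x' := b) (k := ε + C * ‖b - a‖) hp hφ hm hf hf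
    (fun y => by
      have := h (a + y) (b + y)
      rw [add_sub_add_right_eq_sub] at this
      linarith)
  linarith

theorem le_Sop_self (hp : 1 < p) (hφ : IsPenalty p φ) (hm : MemPp p m) {f : Ed d → ℝ}
    (hf : BUC f) (x : Ed d) : ∫ y, f (x + y) ∂m ≤ Sop p φ m t f x := by
  obtain ⟨M, hM⟩ := hf.bdd
  have := le_Sop (φ := φ) (t := t) (m := m) (x := x) hM hm (le_refl (0 : ℝ))
    (by rw [Wp_self hp hm]; simp [phit_zero hφ])
  simpa using this

theorem Sop_bdd (hp : 1 < p) (hφ : IsPenalty p φ) (hm : MemPp p m) {f : Ed d → ℝ}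
    (hf : BUC f) {M : ℝ} (hM : ∀ x, |f x| ≤ M) (x : Ed d) : |Sop p φ m t f x| ≤ M := by
  have key : ∀ ν : Measure (Ed d), MemPp p ν → |∫ y, f (x + y) ∂ν| ≤ M := by
    intro ν hν
    have := hν.1
    have h1 : ‖∫ y, f (x + y) ∂ν‖ ≤ M * ν.real univ :=
      norm_integral_le_of_norm_le_const (Eventually.of_forall fun y => hM _)
    simpa using h1
  rw [abs_le]
  constructor
  · exact (abs_le.1 (key m hm)).1.trans (le_Sop_self hp hφ hm hf x)
  · refine Sop_le hp hφ hm fun ν c hν hc _ => ?_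
    have := (abs_le.1 (key ν hν)).2
    linarith

theorem Sop_buc (hp : 1 < p) (hφ : IsPenalty p φ) (hm : MemPp p m) {f : Ed d → ℝ}
    (hf : BUC f) : BUC (Sop p φ m t f) := by
  refine ⟨?_, fun ε hε => ?_⟩
  · obtain ⟨M, hM⟩ := hf.bdd
    exact ⟨M, Sop_bdd hp hφ hm hf hM⟩
  · obtain ⟨C, hC, h⟩ := hf.mod ε hε
    exact ⟨C, hC, Sop_mod hp hφ hm hf h⟩

theorem memPp_dirac (hp : 1 < p) : MemPp p (Measure.dirac (0 : Ed d)) := by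
  refine ⟨inferInstance, ?_⟩
  have : 0 < p := by linarith
  simp [this]

theorem Sop_zero (hp : 1 < p) (hφ : IsPenalty p φ) {f : Ed d → ℝ} (hf : BUC f) :
    Sop p φ (Measure.dirac 0) 0 f = f := by
  have hd : MemPp p (Measure.dirac (0 : Ed d)) := memPp_dirac hp
  funext x
  refine le_antisymm ?_ ?_
  · refine Sop_le hp hφ hd fun ν c hν hc hpen => ?_
    have hW : Wp p (Measure.dirac 0) ν = 0 := by
      unfold phit at hpen
      rw [if_neg (lt_irrefl _)] at hpen
      by_contra hne
      have hpos : 0 < Wp p (Measure.dirac 0) ν := lt_of_le_of_ne (Wp_nonneg _ _) (Ne.symm hne)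
      rw [if_neg (by simpa using hpos)] at hpen
      exact absurd hpen (by simp)
    obtain ⟨M, hM⟩ := hf.bdd
    refine le_of_forall_pos_le_add fun ε hε => ?_
    obtain ⟨C, hC, h⟩ := hf.mod ε hε
    have := coupling_bound hp hd hν (f := f) (G := fun a => f a + ε) (M' := M + ε) hC
      (le_refl (0 : ℝ)) hf.cont hM (hf.cont.add continuous_const)
      (fun x => (abs_add_le _ _).trans (by rw [abs_of_pos hε]; linarith [hM x]))
      (fun a b => by simpa using h a b) x
    rw [hW] at this
    simp at this
    linarith
  · have := le_Sop_self (t := 0) hp hφ hd hf x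
    simpa using this

theorem Sop_shift (hp : 1 < p) (hφ : IsPenalty p φ) (hm : MemPp p m) (ht : 0 < t) {f : Ed d → ℝ}
    (hf : BUC f) {b : Ed d} {c : ℝ} (hc : 0 ≤ c) (hb : Pen φ ‖b‖ c) (x : Ed d) :
    ∫ y, f (x + t • b + y) ∂m - t * c ≤ Sop p φ m t f x := by
  obtain ⟨M, hM⟩ := hf.bdd
  obtain ⟨h1, h2⟩ := Wp_shift hp hm (t • b)
  have h3 : phit φ t (Wp p m (m.map (fun y => y + t • b))).toNNReal ≤ ENNReal.ofReal (t * c) := by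
    rw [phit_pos_iff ht]
    refine Pen_mono hφ ?_ (by rw [mul_div_cancel_left₀ _ ht.ne']) hb
    rw [div_le_iff₀ ht]
    rw [norm_smul, Real.norm_of_nonneg ht.le] at h2
    linarith
  have := le_Sop (x := x) hM h1 (by positivity) h3
  rw [integral_map (by fun_prop)
    (by have := hf.cont; fun_prop : Continuous fun z => f (x + z)).aestronglyMeasurable] at this
  refine le_trans (le_of_eq ?_) this
  congr 2
  funext y
  congr 1
  abel

theorem Sop_upper (hp : 1 < p) (hφ : IsPenalty p φ) (hm : MemPp p m) (ht : 0 < t)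
    {f G : Ed d → ℝ} (hf : BUC f) {M' : ℝ} (hG : Continuous G) (hGM : ∀ x, |G x| ≤ M') {C Φ : ℝ}
    (hC : 0 ≤ C) (hΦ : ∀ r k : ℝ, 0 ≤ r → 0 ≤ k → Pen φ r k → C * r - k ≤ Φ)
    (h : ∀ a b, f b ≤ G a + C * ‖b - a‖) (x : Ed d) :
    Sop p φ m t f x ≤ (∫ y, G (x + y) ∂m) + t * Φ := by
  obtain ⟨M, hM⟩ := hf.bdd
  refine Sop_le hp hφ hm fun ν c hν hc hpen => ?_
  have h1 := coupling_bound hp hm hν hC (le_refl (0 : ℝ)) hf.cont hM hG hGM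
    (fun a b => by have := h a b; simpa using this) x
  rw [phit_pos_iff ht] at hpen
  have h2 := hΦ _ _ (div_nonneg (Wp_nonneg _ _) ht.le) (div_nonneg hc ht.le) hpen
  have h3 := mul_le_mul_of_nonneg_left h2 ht.le
  have e : t * (C * (Wp p m ν / t) - c / t) = C * Wp p m ν - c := by
    field_simp
  rw [e] at h3
  linarith

theorem exists_conj_bound (hp : 1 < p) (hφ : IsPenalty p φ) {C : ℝ} (hC : 0 ≤ C) :
    ∃ Φ, 0 ≤ Φ ∧ ∀ r k : ℝ, 0 ≤ r → 0 ≤ k → Pen φ r k → C * r - k ≤ Φ := by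
  obtain ⟨Φ, R, ε₀, hΦ, hR, hε₀, hΦe, hb⟩ := phiStar_facts hp hφ C.toNNReal
  refine ⟨Φ, hΦ, fun r k hr hk hP => ?_⟩
  have := hb 0 le_rfl hε₀.le r k hr hk hP
  rw [Real.coe_toNNReal _ hC] at this
  simpa using this

theorem exists_conj_small (hp : 1 < p) (hφ : IsPenalty p φ) {ε : ℝ} (hε : 0 < ε) :
    ∃ C, 0 < C ∧ ∀ r k : ℝ, 0 ≤ r → 0 ≤ k → Pen φ r k → C * r - k ≤ ε := by
  obtain ⟨Φ, R, ε₀, hΦ, hR, hε₀, hΦe, hb⟩ := phiStar_facts hp hφ 0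
  have hR' : 0 ≤ R + R ^ p := by positivity
  have hΦ0 : Φ = 0 := by
    have : phiStar φ 0 = 0 := by simp [phiStar]
    rw [this] at hΦe
    exact le_antisymm (ENNReal.ofReal_eq_zero.1 hΦe.symm) hΦ
  refine ⟨min ε₀ (ε / (R + R ^ p + 1)), by positivity, fun r k hr hk hP => ?_⟩
  have h0 : 0 ≤ min ε₀ (ε / (R + R ^ p + 1)) := by positivity
  have := hb _ h0 (min_le_left _ _) r k hr hk hP
  have h2 : min ε₀ (ε / (R + R ^ p + 1)) * (R + R ^ p) ≤ ε := by
    calc _ ≤ (ε / (R + R ^ p + 1)) * (R + R ^ p + 1) :=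
          mul_le_mul (min_le_right _ _) (by linarith) hR' (by positivity)
      _ = ε := by field_simp
  have h3 : 0 ≤ min ε₀ (ε / (R + R ^ p + 1)) * r ^ p := by positivity
  simp only [NNReal.coe_zero, zero_add] at this
  linarith

theorem tendsto_integral_C0 [IsProbabilityMeasure m] {G : Ed d → ℝ} (hG : IsC0 G) :
    Tendsto (fun x => ∫ y, G (x + y) ∂m) (cocompact (Ed d)) (𝓝 0) := by
  obtain ⟨M, hM0, hM⟩ := C0_bdd hG
  have : (0 : ℝ) = ∫ _ : Ed d, (0 : ℝ) ∂m := by simp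
  rw [this]
  have hcg : (cocompact (Ed d)).IsCountablyGenerated := by
    rw [← Metric.cobounded_eq_cocompact, ← comap_norm_atTop]
    infer_instance
  refine tendsto_integral_filter_of_dominated_convergence (fun _ => M) ?_ ?_ (integrable_const M) ?_
  · refine Eventually.of_forall fun x => ?_
    have := hG.1
    exact (by fun_prop : Continuous fun z => G (x + z)).aestronglyMeasurable
  · exact Eventually.of_forall fun x => Eventually.of_forall fun y => hM _
  · refine Eventually.of_forall fun y => ?_
    exact hG.2.comp (Homeomorph.addRight y).isClosedEmbedding.tendsto_cocompact

theorem integral_C0 [IsProbabilityMeasure m] {G : Ed d → ℝ} (hG : IsC0 G) :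
    IsC0 (fun x => ∫ y, G (x + y) ∂m) := by
  refine ⟨?_, tendsto_integral_C0 hG⟩
  obtain ⟨M, hM0, hM⟩ := C0_bdd hG
  have := hG.1
  exact continuous_of_dominated (bound := fun _ => M)
    (fun x => (by fun_prop : Continuous fun z => G (x + z)).aestronglyMeasurable)
    (fun x => Eventually.of_forall fun y => hM _) (integrable_const M)
    (Eventually.of_forall fun y => by fun_prop)

theorem Sop_C0 (hp : 1 < p) (hφ : IsPenalty p φ) (hm : MemPp p m) (ht : 0 < t)
    {f : Ed d → ℝ} (hf : IsC0 f) : IsC0 (Sop p φ m t f) := by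
  have hm1 := hm.1
  refine ⟨(Sop_buc hp hφ hm hf.buc).cont, ?_⟩
  rw [Metric.tendsto_nhds]
  intro ε hε
  obtain ⟨C, hC, hΦ⟩ := exists_conj_small hp hφ (ε := ε / 4 / t) (by positivity)
  obtain ⟨M, hM0, hM⟩ := C0_bdd hf
  obtain ⟨R, hR⟩ : ∃ R, ∀ x, R ≤ ‖x‖ → |f x| < ε / 4 := by
    have h1 := (Metric.tendsto_nhds.1 hf.2) (ε / 4) (by positivity)
    rw [← Metric.cobounded_eq_cocompact, ← comap_norm_atTop] at h1
    obtain ⟨R, hR⟩ := eventually_atTop.1 (eventually_comap.1 h1)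
    exact ⟨R, fun x hx => by simpa using hR _ hx x rfl⟩
  let G : Ed d → ℝ := fun a => max 0 (M + C * R - C * ‖a‖)
  have hGc : Continuous G := by fun_prop
  have hG0 : ∀ a, 0 ≤ G a := fun a => le_max_left _ _
  have hGB : ∀ a, |G a| ≤ max 0 (M + C * R) := by
    intro a
    rw [abs_of_nonneg (hG0 a)]
    refine max_le_max le_rfl ?_
    have : 0 ≤ C * ‖a‖ := by positivity
    linarith
  have hG : IsC0 G := by
    refine ⟨hGc, ?_⟩
    refine tendsto_const_nhds.congr' ?_
    rw [← Metric.cobounded_eq_cocompact, ← comap_norm_atTop]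
    refine eventually_comap.2 ?_
    filter_upwards [eventually_ge_atTop ((M + C * R) / C)] with r hr a ha
    rw [div_le_iff₀ hC] at hr
    simp only [G]
    rw [max_eq_left]
    rw [ha]; linarith
  have key : ∀ x, Sop p φ m t f x ≤ (∫ y, G (x + y) ∂m) + ε / 2 := by
    intro x
    have h1 := Sop_upper hp hφ hm ht hf.buc (G := fun a => G a + ε / 4)
      (M' := max 0 (M + C * R) + ε / 4) (hGc.add continuous_const)
      (fun a => (abs_add_le _ _).trans (by rw [abs_of_pos (by positivity : 0 < ε / 4)]; linarith [hGB a]))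
      hC.le hΦ (fun a b => by
        by_cases hb : R ≤ ‖b‖
        · have h1 := (abs_lt.1 (hR b hb)).2
          have h2 := hG0 a
          have h3 : 0 ≤ C * ‖b - a‖ := by positivity
          linarith
        · have h1 := (abs_le.1 (hM b)).2
          have h2 : M + C * R - C * ‖a‖ ≤ G a := le_max_right _ _
          have h3 : ‖a‖ ≤ ‖b‖ + ‖b - a‖ := by
            have := norm_sub_le b (b - a)
            simpa using this
          nlinarith) x
    rw [integral_add (hG.buc.integrable x) (integrable_const _)] at h1
    have e : t * (ε / 4 / t) = ε / 4 := by field_simp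
    rw [e] at h1
    simp at h1
    linarith
  have t1 := (Metric.tendsto_nhds.1 (tendsto_integral_C0 (m := m) hG)) (ε / 2) (by positivity)
  have t2 := (Metric.tendsto_nhds.1 (tendsto_integral_C0 (m := m) hf)) ε hε
  filter_upwards [t1, t2] with x h1 h2
  rw [Real.dist_eq, sub_zero, abs_lt] at *
  have h3 := key x
  have h4 := le_Sop_self (t := t) hp hφ hm hf.buc x
  constructor <;> linarith [h1.1, h1.2, h2.1, h2.2]
end

/-! ### Sub-semigroup property `S(s) S(t) f ≤ S(s+t) f` -/

section
open ProbabilityTheory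
variable {d : ℕ} {p : ℝ} {φ : ℝ≥0 → ℝ≥0∞}

/-- Glued measure: law of `y + z` with `y ∼ ν1` and `z ∼ N (Y y)`. -/
noncomputable def glue (ν1 : Measure (Ed d)) (K : Kernel (Ed d) (Ed d)) : Measure (Ed d) :=
  (ν1 ⊗ₘ K).map (fun q => q.1 + q.2)

/-- kernel given by a simple function -/
noncomputable def skern {Ω : Type*} [MeasurableSpace Ω] {β : Type*} [MeasurableSpace β]
    (Y : SimpleFunc Ω (Measure β)) : Kernel Ω β := ⟨Y, Y.measurable⟩

theorem skern_apply {Ω : Type*} [MeasurableSpace Ω] {β : Type*} [MeasurableSpace β]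
    (Y : SimpleFunc Ω (Measure β)) (ω : Ω) : skern Y ω = Y ω := rfl

theorem glue_memPp (hp : 1 < p) {ν1 : Measure (Ed d)} (hν1 : MemPp p ν1)
    (Y : SimpleFunc (Ed d) (Ed d)) {N : Ed d → Measure (Ed d)} (hN : ∀ e, MemPp p (N e)) :
    MemPp p (glue ν1 (skern (Y.map N))) := by
  have := hν1.1
  have hmk : IsMarkovKernel (skern (Y.map N)) := ⟨fun ω => (hN (Y ω)).1⟩
  have hp0 : 0 < p := by linarith
  rw [memPp_iff hp]
  have hadd : Measurable (fun q : Ed d × Ed d => q.1 + q.2) := by fun_prop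
  refine ⟨Measure.isProbabilityMeasure_map hadd.aemeasurable, ?_⟩
  unfold glue
  rw [memLp_map_measure_iff (g := fun x : Ed d => x) aestronglyMeasurable_id hadd.aemeasurable]
  have h1 : MemLp (fun q : Ed d × Ed d => q.1) (ENNReal.ofReal p) (ν1 ⊗ₘ skern (Y.map N)) := by
    have h := ((memPp_iff hp ν1).1 hν1).2
    rw [← Measure.fst_compProd ν1 (skern (Y.map N))] at h
    exact h.comp_of_map measurable_fst.aemeasurable
  have h2 : MemLp (fun q : Ed d × Ed d => q.2) (ENNReal.ofReal p) (ν1 ⊗ₘ skern (Y.map N)) := by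
    refine ⟨measurable_snd.aestronglyMeasurable, ?_⟩
    rw [← eLp_eq hp, ENNReal.rpow_lt_top_iff_of_pos (by positivity),
      Measure.lintegral_compProd (by fun_prop)]
    simp only [skern_apply, SimpleFunc.map_apply]
    let H : SimpleFunc (Ed d) ℝ≥0∞ := Y.map (fun e => ∫⁻ z, (‖z‖₊ : ℝ≥0∞) ^ p ∂(N e))
    change ∫⁻ a, H a ∂ν1 < ∞
    rw [SimpleFunc.lintegral_eq_lintegral]
    exact SimpleFunc.FinMeasSupp.lintegral_lt_top (by
      rw [SimpleFunc.finMeasSupp_iff_support]; exact measure_lt_top _ _)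
      (Eventually.of_forall fun y => (hN (Y y)).2.ne)
  exact h1.add h2

set_option maxHeartbeats 1000000 in
theorem glue_W (hp : 1 < p) {m1 m2 ν1 : Measure (Ed d)} (hm1 : MemPp p m1) (hm2 : MemPp p m2)
    (hν1 : MemPp p ν1)
    (Y : SimpleFunc (Ed d) (Ed d)) {N : Ed d → Measure (Ed d)} (hN : ∀ e, MemPp p (N e)) :
    Wp p (m1.conv m2) (glue ν1 (skern (Y.map N))) ≤
      Wp p m1 ν1 + (∫ y, Wp p m2 (N (Y y)) ^ p ∂ν1) ^ (1 / p) := by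
  have hm1' := hm1.1
  have hm2' := hm2.1
  have hν1' := hν1.1
  have hN' : ∀ e, IsProbabilityMeasure (N e) := fun e => (hN e).1
  have hp0 : 0 < p := by linarith
  have hadd : Measurable (fun q : Ed d × Ed d => q.1 + q.2) := by fun_prop
  have hV0 : 0 ≤ (∫ y, Wp p m2 (N (Y y)) ^ p ∂ν1) ^ (1 / p) := by
    have : 0 ≤ ∫ y, Wp p m2 (N (Y y)) ^ p ∂ν1 := integral_nonneg fun y =>
      Real.rpow_nonneg (Wp_nonneg _ _) _
    positivity
  have hW0 := Wp_nonneg (p := p) m1 ν1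
  refine le_of_forall_pos_le_add fun η hη => ?_
  obtain ⟨γ1, hγ1, hc1⟩ := exists_coupling hp hm1 hν1 (s := Wp p m1 ν1 + η / 2) (by linarith)
  have hg : ∀ e, ∃ γ, IsCoupling γ m2 (N e) ∧
      eLpNorm disp (ENNReal.ofReal p) γ < ENNReal.ofReal (Wp p m2 (N e) + η / 2) := fun e =>
    exists_coupling hp hm2 (hN e) (by linarith)
  choose g hgc hgs using hg
  have hγ1' := coupling_prob hγ1
  have hg' : ∀ e, IsProbabilityMeasure (g e) := fun e => coupling_prob (hgc e)
  -- the kernel of couplings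
  let Y2 : SimpleFunc (Ed d × Ed d) (Ed d) := Y.comp Prod.snd measurable_snd
  let K2 : Kernel (Ed d × Ed d) (Ed d × Ed d) := skern (Y2.map g)
  have hK2 : ∀ q, K2 q = g (Y q.2) := fun q => rfl
  have hmk : IsMarkovKernel K2 := ⟨fun q => hg' (Y q.2)⟩
  have hmk1 : IsMarkovKernel (skern (Y.map N)) := ⟨fun ω => hN' (Y ω)⟩
  let Γ := γ1 ⊗ₘ K2
  let T : (Ed d × Ed d) × (Ed d × Ed d) → Ed d × Ed d := fun q => (q.1.1 + q.2.1, q.1.2 + q.2.2)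
  have hT : Measurable T := by fun_prop
  have hcoup : IsCoupling (Γ.map T) (m1.conv m2) (glue ν1 (skern (Y.map N))) := by
    constructor
    · rw [Measure.map_map measurable_fst hT]
      ext B hB
      rw [Measure.map_apply (measurable_fst.comp hT) hB,
        Measure.compProd_apply ((measurable_fst.comp hT) hB), Measure.conv,
        Measure.map_apply hadd hB, Measure.prod_apply (hadd hB), ← hγ1.1,
        lintegral_map (measurable_measure_prodMk_left (hadd hB)) measurable_fst]
      refine lintegral_congr fun q => ?_
      rw [hK2, ← (hgc (Y q.2)).1,
        Measure.map_apply measurable_fst (measurable_prodMk_left (hadd hB))]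
      rfl
    · rw [Measure.map_map measurable_snd hT]
      ext B hB
      rw [Measure.map_apply (measurable_snd.comp hT) hB,
        Measure.compProd_apply ((measurable_snd.comp hT) hB), glue,
        Measure.map_apply hadd hB, Measure.compProd_apply (hadd hB), ← hγ1.2,
        lintegral_map (Kernel.measurable_kernel_prodMk_left (hadd hB)) measurable_snd]
      refine lintegral_congr fun q => ?_
      rw [hK2, skern_apply, SimpleFunc.map_apply, ← (hgc (Y q.2)).2,
        Measure.map_apply measurable_snd (measurable_prodMk_left (hadd hB))]
      rfl
  have hη2 : 0 ≤ η / 2 := by positivity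
  refine (Wp_le hp hcoup (s := (Wp p m1 ν1 + η / 2) +
    ((∫ y, Wp p m2 (N (Y y)) ^ p ∂ν1) ^ (1 / p) + η / 2)) (add_nonneg (add_nonneg hW0 hη2) (add_nonneg hV0 hη2)) ?_).trans (by linarith)
  rw [eLpNorm_map_measure measurable_disp.aestronglyMeasurable hT.aemeasurable]
  have e : disp ∘ T = (fun q : (Ed d × Ed d) × (Ed d × Ed d) => disp q.1) +
      (fun q : (Ed d × Ed d) × (Ed d × Ed d) => disp q.2) := by
    funext q
    simp only [Function.comp, Pi.add_apply, disp, T]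
    abel
  rw [e]
  have md1 : Measurable (fun q : (Ed d × Ed d) × (Ed d × Ed d) => disp q.1) :=
    measurable_disp.comp measurable_fst
  have md2 : Measurable (fun q : (Ed d × Ed d) × (Ed d × Ed d) => disp q.2) :=
    measurable_disp.comp measurable_snd
  have hadd2 := eLpNorm_add_le (μ := Γ) md1.aestronglyMeasurable md2.aestronglyMeasurable
    (one_le_ofReal_of_one_lt hp)
  refine hadd2.trans ?_
  rw [ENNReal.ofReal_add (add_nonneg hW0 hη2) (add_nonneg hV0 hη2)]
  refine add_le_add ?_ ?_
  · have : eLpNorm (fun q : (Ed d × Ed d) × (Ed d × Ed d) => disp q.1) (ENNReal.ofReal p) Γ =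
        eLpNorm disp (ENNReal.ofReal p) γ1 := by
      conv_rhs => rw [← Measure.fst_compProd γ1 K2]
      rw [Measure.fst, eLpNorm_map_measure measurable_disp.aestronglyMeasurable
        measurable_fst.aemeasurable]
      rfl
    rw [this]
    exact hc1.le
  · -- second part
    let w : SimpleFunc (Ed d) ℝ := Y.map (fun e => Wp p m2 (N e))
    have hw0 : ∀ y, 0 ≤ w y := fun y => Wp_nonneg _ _
    have s1 : eLpNorm (fun q : (Ed d × Ed d) × (Ed d × Ed d) => disp q.2) (ENNReal.ofReal p) Γ ≤
        eLpNorm (fun y => w y + η / 2) (ENNReal.ofReal p) ν1 := by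
      rw [← eLp_eq hp, eLpNorm_eq_lintegral_rpow_enorm_toReal (ofReal_ne_zero_of_one_lt hp)
        ENNReal.ofReal_ne_top, ENNReal.toReal_ofReal hp0.le]
      refine ENNReal.rpow_le_rpow ?_ (by positivity)
      rw [Measure.lintegral_compProd (by fun_prop), ← hγ1.2,
        lintegral_map (by fun_prop) measurable_snd]
      refine lintegral_mono fun q => ?_
      rw [hK2]
      have h1 := (hgs (Y q.2)).le
      rw [← eLp_eq hp] at h1
      have h2 := ENNReal.rpow_le_rpow h1 hp0.le
      rw [← ENNReal.rpow_mul, one_div, inv_mul_cancel₀ hp0.ne', ENNReal.rpow_one] at h2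
      refine h2.trans (le_of_eq ?_)
      congr 1
      rw [Real.enorm_of_nonneg (by have := hw0 q.2; positivity)]
      rfl
    refine s1.trans ?_
    have hwm : MemLp w (ENNReal.ofReal p) ν1 := SimpleFunc.memLp_of_isFiniteMeasure w _ _
    have s2 := eLpNorm_add_le (μ := ν1) (f := w) (g := fun _ => η / 2) hwm.1
      aestronglyMeasurable_const (one_le_ofReal_of_one_lt hp)
    refine s2.trans ?_
    rw [ENNReal.ofReal_add hV0 hη2]
    refine add_le_add (le_of_eq ?_) (le_of_eq ?_)
    · rw [hwm.eLpNorm_eq_integral_rpow_norm (ofReal_ne_zero_of_one_lt hp) ENNReal.ofReal_ne_top,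
        ENNReal.toReal_ofReal hp0.le, one_div]
      congr 2
      refine integral_congr_ae (Eventually.of_forall fun y => ?_)
      simp only
      rw [Real.norm_of_nonneg (hw0 y)]
      rfl
    · rw [eLpNorm_const _ (ofReal_ne_zero_of_one_lt hp) (NeZero.ne _)]
      simp only [measure_univ, ENNReal.one_rpow, mul_one]
      rw [Real.enorm_of_nonneg hη2]
end

section
open ProbabilityTheory
variable {d : ℕ} {p : ℝ} {φ : ℝ≥0 → ℝ≥0∞}

theorem phit_combine (hp : 1 < p) (hφ : IsPenalty p φ) {s t W1 c1 W : ℝ} (hs : 0 < s) (ht : 0 < t)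
    (hW1 : 0 ≤ W1) (hc1 : 0 ≤ c1)
    (h1 : phit φ s W1.toNNReal ≤ ENNReal.ofReal c1)
    (ν1 : Measure (Ed d)) [IsProbabilityMeasure ν1] (w c : SimpleFunc (Ed d) ℝ)
    (hw : ∀ y, 0 ≤ w y) (hc : ∀ y, 0 ≤ c y)
    (h2 : ∀ y, phit φ t (w y).toNNReal ≤ ENNReal.ofReal (c y))
    (hW : W ≤ W1 + (∫ y, w y ^ p ∂ν1) ^ (1 / p)) :
    phit φ (s + t) W.toNNReal ≤ ENNReal.ofReal (c1 + ∫ y, c y ∂ν1) := by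
  have hp0 : 0 < p := by linarith
  have hst : 0 < s + t := by positivity
  have hI0 : 0 ≤ ∫ y, w y ^ p ∂ν1 := integral_nonneg fun y => Real.rpow_nonneg (hw y) _
  have hV0 : 0 ≤ (∫ y, w y ^ p ∂ν1) ^ (1 / p) := by positivity
  have hc0 : 0 ≤ ∫ y, c y ∂ν1 := integral_nonneg hc
  rw [phit_pos_iff hs] at h1
  rw [phit_pos_iff hst]
  have h3 : Pen φ ((∫ y, w y ^ p ∂ν1) ^ (1 / p) / t) ((∫ y, c y ∂ν1) / t) := by
    have hJ := Pen_jensen hp hφ ν1 (W := fun y => w y / t) (c := fun y => c y / t)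
      (fun y => div_nonneg (hw y) ht.le) (fun y => div_nonneg (hc y) ht.le)
      (fun y => (phit_pos_iff ht).1 (h2 y))
      (SimpleFunc.integrable_of_isFiniteMeasure (w.map fun r => (r / t) ^ p))
      (SimpleFunc.integrable_of_isFiniteMeasure (c.map fun r => r / t))
    have e1 : ∫ y, (w y / t) ^ p ∂ν1 = (∫ y, w y ^ p ∂ν1) / t ^ p := by
      rw [← integral_div]
      refine integral_congr_ae (Eventually.of_forall fun y => ?_)
      exact Real.div_rpow (hw y) ht.le p
    rw [e1, integral_div, Real.div_rpow hI0 (by positivity)] at hJ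
    have e2 : (t ^ p) ^ (1 / p) = t := by
      rw [one_div, Real.rpow_rpow_inv ht.le hp0.ne']
    rwa [e2] at hJ
  have h4 := Pen_convex hφ (div_nonneg hW1 hs.le) (div_nonneg hV0 ht.le) (div_nonneg hc1 hs.le)
    (div_nonneg hc0 ht.le) (l := s / (s + t)) (m := t / (s + t)) (by positivity) (by positivity)
    (by field_simp) h1 h3
  refine Pen_mono hφ ?_ (le_of_eq ?_) h4
  · have : s / (s + t) * (W1 / s) + t / (s + t) * ((∫ y, w y ^ p ∂ν1) ^ (1 / p) / t) =
      (W1 + (∫ y, w y ^ p ∂ν1) ^ (1 / p)) / (s + t) := by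
      field_simp
    rw [this]
    gcongr
  · field_simp

theorem mod_min {f : Ed d → ℝ} {M ε C : ℝ} (hM : ∀ x, |f x| ≤ M) (hε : 0 ≤ ε) (h : HasMod f ε C)
    (a b : Ed d) : f b ≤ f a + ε + min (C * ‖b - a‖) (2 * M) := by
  rcases min_cases (C * ‖b - a‖) (2 * M) with h1 | h1
  · rw [h1.1]; exact h a b
  · rw [h1.1]
    have := abs_le.1 (hM a)
    have := abs_le.1 (hM b)
    linarith

theorem Sop_semi (hp : 1 < p) (hφ : IsPenalty p φ) {m1 m2 : Measure (Ed d)} (hm1 : MemPp p m1)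
    (hm2 : MemPp p m2) {s t : ℝ} (hs : 0 < s) (ht : 0 < t) {f : Ed d → ℝ} (hf : BUC f) (x : Ed d) :
    Sop p φ m1 s (Sop p φ m2 t f) x ≤ Sop p φ (m1.conv m2) (s + t) f x := by
  have hgB := Sop_buc (t := t) hp hφ hm2 hf
  obtain ⟨M, hM⟩ := hf.bdd
  have hgM := Sop_bdd (t := t) hp hφ hm2 hf hM
  have hM0 : 0 ≤ M := (abs_nonneg _).trans (hM 0)
  refine Sop_le hp hφ hm1 fun ν1 c1 hν1 hc1 hpen1 => ?_
  have hν1' := hν1.1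
  refine le_of_forall_pos_le_add fun ε' hε' => ?_
  obtain ⟨ε, hε, hεε⟩ : ∃ ε, 0 < ε ∧ 5 * ε = ε' := ⟨ε' / 5, by positivity, by ring⟩
  obtain ⟨C, hC, hmod⟩ := hf.mod ε hε
  have hgmod := Sop_mod (t := t) hp hφ hm2 hf hmod
  have hnear : ∀ e, ∃ ν c, MemPp p ν ∧ 0 ≤ c ∧ phit φ t (Wp p m2 ν).toNNReal ≤ ENNReal.ofReal c ∧
      Sop p φ m2 t f (x + e) ≤ (∫ y, f (x + e + y) ∂ν) - c + ε := fun e =>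
    Sop_near hp hφ hm2 f (x + e) hε
  choose N c hN hc hpen hnear using hnear
  -- discretisation
  obtain ⟨n, hn⟩ : ∃ n : ℕ, ∫ y, min (C * ‖y - SimpleFunc.nearestPt (TopologicalSpace.denseSeq (Ed d)) n y‖)
      (2 * M) ∂ν1 < ε := by
    have hlim : Tendsto (fun n : ℕ => ∫ y, min (C * ‖y - SimpleFunc.nearestPt
        (TopologicalSpace.denseSeq (Ed d)) n y‖) (2 * M) ∂ν1) atTop (𝓝 (∫ _, 0 ∂ν1)) := by
      refine tendsto_integral_of_dominated_convergence (fun _ => 2 * M) (fun n => ?_)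
        (integrable_const _) (fun n => ?_) ?_
      · have := (SimpleFunc.nearestPt (TopologicalSpace.denseSeq (Ed d)) n).measurable
        exact (by fun_prop : Measurable _).aestronglyMeasurable
      · refine Eventually.of_forall fun y => ?_
        rw [Real.norm_of_nonneg (by positivity)]
        exact min_le_right _ _
      · refine Eventually.of_forall fun y => ?_
        have h1 : Tendsto (fun n => SimpleFunc.nearestPt (TopologicalSpace.denseSeq (Ed d)) n y)
            atTop (𝓝 y) := SimpleFunc.tendsto_nearestPt
          ((TopologicalSpace.denseRange_denseSeq (Ed d)) y)
        have h2 : Tendsto (fun n => min (C * ‖y - SimpleFunc.nearestPt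
            (TopologicalSpace.denseSeq (Ed d)) n y‖) (2 * M)) atTop
            (𝓝 (min (C * ‖y - y‖) (2 * M))) :=
          ((tendsto_const_nhds.sub h1).norm.const_mul C).min tendsto_const_nhds
        have e : min (C * ‖y - y‖) (2 * M) = 0 := by simp [hM0]
        rwa [e] at h2
    rw [integral_zero] at hlim
    exact (hlim.eventually (gt_mem_nhds hε)).exists
  generalize hYd : SimpleFunc.nearestPt (TopologicalSpace.denseSeq (Ed d)) n = Y at hn
  have hmk : IsMarkovKernel (skern (Y.map N)) := ⟨fun ω => (hN (Y ω)).1⟩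
  -- integrals against the glued measure
  have hadd : Measurable (fun q : Ed d × Ed d => q.1 + q.2) := by fun_prop
  have hfc := hf.cont
  have hfint : Integrable (fun q : Ed d × Ed d => f (x + (q.1 + q.2))) (ν1 ⊗ₘ skern (Y.map N)) :=
    Integrable.of_bound (C := M)
      (by fun_prop : Continuous fun q : Ed d × Ed d => f (x + (q.1 + q.2))).aestronglyMeasurable
      (Eventually.of_forall fun y => hM _)
  have eglue : ∫ z, f (x + z) ∂(glue ν1 (skern (Y.map N))) =
      ∫ y, ∫ z, f (x + (y + z)) ∂(N (Y y)) ∂ν1 := by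
    unfold glue
    rw [integral_map hadd.aemeasurable
      (by fun_prop : Continuous fun z => f (x + z)).aestronglyMeasurable,
      Measure.integral_compProd hfint]
    rfl
  have hFi : Integrable (fun y => ∫ z, f (x + (y + z)) ∂(N (Y y))) ν1 :=
    Integrable.of_bound (C := M)
      (StronglyMeasurable.integral_kernel_prod_right' (κ := skern (Y.map N))
        (f := fun q : Ed d × Ed d => f (x + (q.1 + q.2)))
        (by fun_prop : Continuous fun q : Ed d × Ed d =>
          f (x + (q.1 + q.2))).stronglyMeasurable).aestronglyMeasurable
      (Eventually.of_forall fun y => by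
        have := (hN (Y y)).1
        refine (norm_integral_le_of_norm_le_const (C := M)
          (Eventually.of_forall fun z => hM _)).trans ?_
        simp)
  have hci : Integrable (fun y => c (Y y)) ν1 :=
    SimpleFunc.integrable_of_isFiniteMeasure (Y.map c)
  have hei : Integrable (fun y => min (C * ‖y - Y y‖) (2 * M)) ν1 := by
    refine Integrable.of_bound (C := 2 * M) ?_ (Eventually.of_forall fun y => ?_)
    · have := Y.measurable
      exact (by fun_prop : Measurable _).aestronglyMeasurable
    · rw [Real.norm_of_nonneg (by positivity)]
      exact min_le_right _ _
  have hpt : ∀ y, Sop p φ m2 t f (x + y) ≤ (∫ z, f (x + (y + z)) ∂(N (Y y))) - c (Y y) +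
      2 * min (C * ‖y - Y y‖) (2 * M) + 3 * ε := by
    intro y
    have hNp := (hN (Y y)).1
    have h1 := mod_min hgM hε.le hgmod (x + Y y) (x + y)
    rw [add_sub_add_left_eq_sub] at h1
    have h2 := hnear (Y y)
    have h3 : ∫ z, f (x + Y y + z) ∂(N (Y y)) ≤
        ∫ z, (f (x + y + z) + (ε + min (C * ‖y - Y y‖) (2 * M))) ∂(N (Y y)) := by
      refine integral_mono (hf.integrable _) ((hf.integrable _).add (integrable_const _)) fun z => ?_
      have := mod_min hM hε.le hmod (x + y + z) (x + Y y + z)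
      rw [add_sub_add_right_eq_sub, add_sub_add_left_eq_sub, norm_sub_rev] at this
      linarith
    rw [integral_add (hf.integrable _) (integrable_const _)] at h3
    simp only [integral_const, probReal_univ, smul_eq_mul, one_mul, add_assoc] at h3 h2
    linarith
  have hmono : ∫ y, Sop p φ m2 t f (x + y) ∂ν1 ≤
      ∫ y, ((∫ z, f (x + (y + z)) ∂(N (Y y))) - c (Y y) +
      2 * min (C * ‖y - Y y‖) (2 * M) + 3 * ε) ∂ν1 :=
    integral_mono (hgB.integrable x)
      (((hFi.sub hci).add (hei.const_mul 2)).add (integrable_const _)) hpt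
  have i2 : Integrable (fun y => (∫ z, f (x + (y + z)) ∂(N (Y y))) - c (Y y)) ν1 := hFi.sub hci
  have i3 : Integrable (fun y => (∫ z, f (x + (y + z)) ∂(N (Y y))) - c (Y y) +
      2 * min (C * ‖y - Y y‖) (2 * M)) ν1 := i2.add (hei.const_mul 2)
  rw [integral_add i3 (integrable_const _), integral_add i2 (hei.const_mul 2),
    integral_sub hFi hci, integral_const_mul] at hmono
  simp only [integral_const, probReal_univ, smul_eq_mul, one_mul] at hmono
  -- admissibility of the glued measure
  have hadm := phit_combine hp hφ hs ht (Wp_nonneg _ _) hc1 hpen1 ν1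
    (Y.map fun e => Wp p m2 (N e)) (Y.map c) (fun y => Wp_nonneg _ _) (fun y => hc _)
    (fun y => hpen _) (glue_W hp hm1 hm2 hν1 Y hN)
  have hc0 : 0 ≤ ∫ y, c (Y y) ∂ν1 := integral_nonneg fun y => hc _
  have hfin := le_Sop (x := x) hM (glue_memPp hp hν1 Y hN) (add_nonneg hc1 hc0) hadm
  rw [eglue] at hfin
  linarith
end

/-! ### Iterates of the one-step operator -/

/-- the standing assumptions -/
structure Ctx {d : ℕ} (p : ℝ) (φ : ℝ≥0 → ℝ≥0∞) (μ : ℝ → Measure (Ed d)) : Prop where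
  hp : 1 < p
  hφ : IsPenalty p φ
  hμ : IsConvSemigroup p μ
  hμ0 : WContinuousAtZero p μ

/-- one-step operator of the semigroup -/
noncomputable def TT {d : ℕ} (p : ℝ) (φ : ℝ≥0 → ℝ≥0∞) (μ : ℝ → Measure (Ed d)) (h : ℝ)
    (g : Ed d → ℝ) : Ed d → ℝ := Sop p φ (μ h) h g

section
variable {d : ℕ} {p : ℝ} {φ : ℝ≥0 → ℝ≥0∞} {μ : ℝ → Measure (Ed d)}

theorem Ctx.mem (H : Ctx p φ μ) {h : ℝ} (hh : 0 ≤ h) : MemPp p (μ h) := H.hμ.2.2 h hh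

theorem Ctx.prob (H : Ctx p φ μ) {h : ℝ} (hh : 0 ≤ h) : IsProbabilityMeasure (μ h) := (H.mem hh).1

theorem T_buc (H : Ctx p φ μ) {h : ℝ} (hh : 0 ≤ h) {f : Ed d → ℝ} (hf : BUC f) :
    BUC (TT p φ μ h f) := Sop_buc H.hp H.hφ (H.mem hh) hf

theorem T_mod (H : Ctx p φ μ) {h : ℝ} (hh : 0 ≤ h) {f : Ed d → ℝ} (hf : BUC f) {ε C : ℝ}
    (hm : HasMod f ε C) : HasMod (TT p φ μ h f) ε C := Sop_mod H.hp H.hφ (H.mem hh) hf hm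

theorem T_bdd (H : Ctx p φ μ) {h : ℝ} (hh : 0 ≤ h) {f : Ed d → ℝ} (hf : BUC f) {M : ℝ}
    (hM : ∀ x, |f x| ≤ M) (x : Ed d) : |TT p φ μ h f x| ≤ M := Sop_bdd H.hp H.hφ (H.mem hh) hf hM x

theorem T_nonexp (H : Ctx p φ μ) {h : ℝ} (hh : 0 ≤ h) {f g : Ed d → ℝ} (hf : BUC f) (hg : BUC g)
    {k : ℝ} (hk : ∀ y, f y ≤ g y + k) (x : Ed d) : TT p φ μ h f x ≤ TT p φ μ h g x + k :=
  Sop_nonexp H.hp H.hφ (H.mem hh) hf hg fun y => hk _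

theorem T_mono (H : Ctx p φ μ) {h : ℝ} (hh : 0 ≤ h) {f g : Ed d → ℝ} (hf : BUC f) (hg : BUC g)
    (hk : ∀ y, f y ≤ g y) (x : Ed d) : TT p φ μ h f x ≤ TT p φ μ h g x :=
  Sop_mono H.hp H.hφ (H.mem hh) hf hg hk x

theorem T_zero (H : Ctx p φ μ) {f : Ed d → ℝ} (hf : BUC f) : TT p φ μ 0 f = f := by
  unfold TT
  rw [H.hμ.1]
  exact Sop_zero H.hp H.hφ hf

theorem T_semi (H : Ctx p φ μ) {s t : ℝ} (hs : 0 ≤ s) (ht : 0 ≤ t) {f : Ed d → ℝ} (hf : BUC f)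
    (x : Ed d) : TT p φ μ s (TT p φ μ t f) x ≤ TT p φ μ (s + t) f x := by
  rcases hs.eq_or_lt with rfl | hs'
  · rw [T_zero H (T_buc H ht hf), zero_add]
  rcases ht.eq_or_lt with rfl | ht'
  · rw [T_zero H hf, add_zero]
  have := Sop_semi H.hp H.hφ (H.mem hs) (H.mem ht) hs' ht' hf x
  rw [← H.hμ.2.1 s t hs ht] at this
  exact this

theorem T_C0 (H : Ctx p φ μ) {h : ℝ} (hh : 0 ≤ h) {f : Ed d → ℝ} (hf : IsC0 f) :
    IsC0 (TT p φ μ h f) := by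
  rcases hh.eq_or_lt with rfl | hh'
  · rw [T_zero H hf.buc]; exact hf
  exact Sop_C0 H.hp H.hφ (H.mem hh) hh' hf

theorem Smu_zero (H : Ctx p φ μ) {f : Ed d → ℝ} (hf : BUC f) : Smu μ 0 f = f := by
  funext x
  unfold Smu
  rw [H.hμ.1, integral_dirac]
  simp

theorem Smu_le_T (H : Ctx p φ μ) {h : ℝ} (hh : 0 ≤ h) {f : Ed d → ℝ} (hf : BUC f) (x : Ed d) :
    Smu μ h f x ≤ TT p φ μ h f x := le_Sop_self H.hp H.hφ (H.mem hh) hf x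

theorem Smu_nonexp (H : Ctx p φ μ) {h : ℝ} (hh : 0 ≤ h) {f g : Ed d → ℝ} (hf : BUC f) (hg : BUC g)
    {k : ℝ} {x' x : Ed d} (hk : ∀ y, f (x' + y) ≤ g (x + y) + k) :
    Smu μ h f x' ≤ Smu μ h g x + k := by
  have := H.prob hh
  have h1 : ∫ y, f (x' + y) ∂(μ h) ≤ ∫ y, (g (x + y) + k) ∂(μ h) :=
    integral_mono (hf.integrable _) ((hg.integrable _).add (integrable_const _)) hk
  rw [integral_add (hg.integrable _) (integrable_const _)] at h1
  simpa [Smu] using h1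

theorem Smu_bdd (H : Ctx p φ μ) {h : ℝ} (hh : 0 ≤ h) {f : Ed d → ℝ} {M : ℝ}
    (hM : ∀ x, |f x| ≤ M) (x : Ed d) : |Smu μ h f x| ≤ M := by
  have := H.prob hh
  have h1 : ‖∫ y, f (x + y) ∂(μ h)‖ ≤ M * (μ h).real univ :=
    norm_integral_le_of_norm_le_const (Eventually.of_forall fun y => hM _)
  simpa [Smu] using h1

theorem Smu_mod (H : Ctx p φ μ) {h : ℝ} (hh : 0 ≤ h) {f : Ed d → ℝ} (hf : BUC f) {ε C : ℝ}
    (hm : HasMod f ε C) : HasMod (Smu μ h f) ε C := by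
  intro a b
  have := Smu_nonexp H hh hf hf (x := a) (x' := b) (k := ε + C * ‖b - a‖) fun y => by
    have := hm (a + y) (b + y)
    rw [add_sub_add_right_eq_sub] at this
    linarith
  linarith

theorem Smu_buc (H : Ctx p φ μ) {h : ℝ} (hh : 0 ≤ h) {f : Ed d → ℝ} (hf : BUC f) :
    BUC (Smu μ h f) := by
  refine ⟨?_, fun ε hε => ?_⟩
  · obtain ⟨M, hM⟩ := hf.bdd
    exact ⟨M, Smu_bdd H hh hM⟩
  · obtain ⟨C, hC, hm⟩ := hf.mod ε hε
    exact ⟨C, hC, Smu_mod H hh hf hm⟩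

theorem Smu_C0 (H : Ctx p φ μ) {h : ℝ} (hh : 0 ≤ h) {f : Ed d → ℝ} (hf : IsC0 f) :
    IsC0 (Smu μ h f) := by
  have := H.prob hh
  exact integral_C0 hf

theorem Smu_semi (H : Ctx p φ μ) {s t : ℝ} (hs : 0 ≤ s) (ht : 0 ≤ t) {f : Ed d → ℝ} (hf : BUC f)
    (x : Ed d) : Smu μ s (Smu μ t f) x = Smu μ (s + t) f x := by
  have h1 := H.prob hs
  have h2 := H.prob ht
  have h3 := H.prob (add_nonneg hs ht)
  unfold Smu
  rw [H.hμ.2.1 s t hs ht] at h3 ⊢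
  rw [integral_conv (hf.integrable x)]
  simp only [add_assoc]

theorem T_shift (H : Ctx p φ μ) {h : ℝ} (hh : 0 ≤ h) {f : Ed d → ℝ} (hf : BUC f) {b : Ed d} {c : ℝ}
    (hc : 0 ≤ c) (hb : Pen φ ‖b‖ c) (x : Ed d) :
    Smu μ h f (x + h • b) - h * c ≤ TT p φ μ h f x := by
  rcases hh.eq_or_lt with rfl | hh'
  · rw [T_zero H hf, Smu_zero H hf]; simp
  · exact Sop_shift H.hp H.hφ (H.mem hh) hh' hf hc hb x

theorem iter_buc (H : Ctx p φ μ) {δ : ℝ} (hδ : 0 ≤ δ) (k : ℕ) {f : Ed d → ℝ} (hf : BUC f) :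
    BUC ((TT p φ μ δ)^[k] f) := by
  induction k with
  | zero => exact hf
  | succ k ih => rw [Function.iterate_succ_apply']; exact T_buc H hδ ih

theorem iter_mod (H : Ctx p φ μ) {δ : ℝ} (hδ : 0 ≤ δ) (k : ℕ) {f : Ed d → ℝ} (hf : BUC f) {ε C : ℝ}
    (hm : HasMod f ε C) : HasMod ((TT p φ μ δ)^[k] f) ε C := by
  induction k with
  | zero => exact hm
  | succ k ih => rw [Function.iterate_succ_apply']; exact T_mod H hδ (iter_buc H hδ k hf) ih

theorem iter_nonexp (H : Ctx p φ μ) {δ : ℝ} (hδ : 0 ≤ δ) (k : ℕ) {f g : Ed d → ℝ} (hf : BUC f)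
    (hg : BUC g) {e : ℝ} (he : ∀ y, f y ≤ g y + e) (x : Ed d) :
    (TT p φ μ δ)^[k] f x ≤ (TT p φ μ δ)^[k] g x + e := by
  induction k generalizing x with
  | zero => exact he x
  | succ k ih =>
    rw [Function.iterate_succ_apply', Function.iterate_succ_apply']
    exact T_nonexp H hδ (iter_buc H hδ k hf) (iter_buc H hδ k hg) ih x

theorem iter_mono (H : Ctx p φ μ) {δ : ℝ} (hδ : 0 ≤ δ) (k : ℕ) {f g : Ed d → ℝ} (hf : BUC f)
    (hg : BUC g) (he : ∀ y, f y ≤ g y) (x : Ed d) :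
    (TT p φ μ δ)^[k] f x ≤ (TT p φ μ δ)^[k] g x := by
  simpa using iter_nonexp H hδ k hf hg (e := 0) (by simpa using he) x

theorem iter_le (H : Ctx p φ μ) {δ : ℝ} (hδ : 0 ≤ δ) (k : ℕ) {f : Ed d → ℝ} (hf : BUC f)
    (x : Ed d) : (TT p φ μ δ)^[k] f x ≤ TT p φ μ (k * δ) f x := by
  induction k generalizing x with
  | zero => simp [T_zero H hf]
  | succ k ih =>
    rw [Function.iterate_succ_apply']
    have hk : 0 ≤ (k : ℝ) * δ := by positivity
    have h1 := T_mono H hδ (iter_buc H hδ k hf) (T_buc H hk hf) ih x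
    have h2 := T_semi H hδ hk hf x
    have e : δ + k * δ = ((k + 1 : ℕ) : ℝ) * δ := by push_cast; ring
    rw [e] at h2
    exact h1.trans h2

theorem iter_ge (H : Ctx p φ μ) {δ : ℝ} (hδ : 0 ≤ δ) (k : ℕ) {f : Ed d → ℝ} (hf : BUC f)
    {b : Ed d} {c : ℝ} (hc : 0 ≤ c) (hb : Pen φ ‖b‖ c) (x : Ed d) :
    Smu μ (k * δ) f (x + (k * δ) • b) - k * δ * c ≤ (TT p φ μ δ)^[k] f x := by
  induction k generalizing x with
  | zero => simp [Smu_zero H hf]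
  | succ k ih =>
    rw [Function.iterate_succ_apply']
    have hk : 0 ≤ (k : ℝ) * δ := by positivity
    have h1 := T_shift H hδ (iter_buc H hδ k hf) hc hb x
    have h2 := Smu_nonexp H hδ (Smu_buc H hk hf) (iter_buc H hδ k hf) (k := k * δ * c)
      (x' := x + δ • b + (k * δ) • b) (x := x + δ • b) (fun y => by
        have := ih (x + δ • b + y)
        rw [add_right_comm] at this
        linarith)
    rw [Smu_semi H hδ hk hf] at h2
    have e : δ + k * δ = ((k + 1 : ℕ) : ℝ) * δ := by push_cast; ring
    have e2 : x + δ • b + (k * δ) • b = x + (((k + 1 : ℕ) : ℝ) * δ) • b := by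
      rw [← e, add_smul, add_assoc]
    rw [e, e2] at h2
    have e3 : ((k + 1 : ℕ) : ℝ) * δ * c = δ * c + k * δ * c := by rw [← e]; ring
    linarith

theorem Pen_zero (hφ : IsPenalty p φ) : Pen φ ‖(0 : Ed d)‖ 0 := by
  simp [Pen, hφ.map_zero]

theorem iter_ge0 (H : Ctx p φ μ) {δ : ℝ} (hδ : 0 ≤ δ) (k : ℕ) {f : Ed d → ℝ} (hf : BUC f)
    (x : Ed d) : Smu μ (k * δ) f x ≤ (TT p φ μ δ)^[k] f x := by
  simpa using iter_ge H hδ k hf le_rfl (Pen_zero H.hφ) x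

/-- The dyadic step -/
noncomputable def dy (n : ℕ) : ℝ := ((2 : ℝ) ^ n)⁻¹

theorem dy_pos (n : ℕ) : 0 < dy n := by unfold dy; positivity

theorem dy_succ (n : ℕ) : dy n = 2 * dy (n + 1) := by
  unfold dy; rw [pow_succ]; field_simp

theorem pow_mul_dy (n m : ℕ) (h : m ≤ n) : ((2 ^ (n - m) : ℕ) : ℝ) * dy n = dy m := by
  unfold dy
  obtain ⟨j, rfl⟩ := Nat.exists_eq_add_of_le h
  push_cast
  rw [Nat.add_sub_cancel_left, pow_add]
  field_simp

theorem dy_tendsto : Tendsto dy atTop (𝓝 0) := by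
  have := tendsto_pow_atTop_nhds_zero_of_lt_one (r := (1 / 2 : ℝ)) (by norm_num) (by norm_num)
  refine this.congr fun n => ?_
  simp [dy]

/-- SiterN with explicit number of steps -/
theorem SiterN_eq (n : ℕ) (t : ℝ) (f : Ed d → ℝ) (k : ℕ) (hk0 : k * dy n ≤ t)
    (hk1 : t < (k + 1) * dy n) :
    SiterN p φ μ n t f = (TT p φ μ (dy n))^[k] (TT p φ μ (t - k * dy n) f) := by
  have h2 : (0 : ℝ) < 2 ^ n := by positivity
  have ht : 0 ≤ t := le_trans (by have := dy_pos n; positivity) hk0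
  have e : ⌊(2 : ℝ) ^ n * t⌋₊ = k := by
    rw [Nat.floor_eq_iff (by positivity)]
    constructor
    · unfold dy at hk0
      rw [← div_eq_mul_inv, div_le_iff₀ h2] at hk0
      linarith
    · unfold dy at hk1
      rw [← div_eq_mul_inv, lt_div_iff₀ h2] at hk1
      linarith
  subst e
  rfl

theorem exists_steps (n : ℕ) {t : ℝ} (ht : 0 ≤ t) : ∃ k : ℕ, k * dy n ≤ t ∧ t < (k + 1) * dy n := by
  have h2 : (0 : ℝ) < 2 ^ n := by positivity
  refine ⟨⌊(2 : ℝ) ^ n * t⌋₊, ?_, ?_⟩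
  · have := Nat.floor_le (a := (2 : ℝ) ^ n * t) (by positivity)
    unfold dy
    rw [← div_eq_mul_inv, div_le_iff₀ h2]
    linarith
  · have := Nat.lt_floor_add_one ((2 : ℝ) ^ n * t)
    unfold dy
    rw [← div_eq_mul_inv, lt_div_iff₀ h2]
    linarith

theorem SiterN_buc (H : Ctx p φ μ) (n : ℕ) {t : ℝ} (ht : 0 ≤ t) {f : Ed d → ℝ} (hf : BUC f) :
    BUC (SiterN p φ μ n t f) := by
  obtain ⟨k, h0, h1⟩ := exists_steps n ht
  rw [SiterN_eq n t f k h0 h1]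
  exact iter_buc H (dy_pos n).le k (T_buc H (by linarith) hf)

theorem SiterN_mod (H : Ctx p φ μ) (n : ℕ) {t : ℝ} (ht : 0 ≤ t) {f : Ed d → ℝ} (hf : BUC f)
    {ε C : ℝ} (hm : HasMod f ε C) : HasMod (SiterN p φ μ n t f) ε C := by
  obtain ⟨k, h0, h1⟩ := exists_steps n ht
  rw [SiterN_eq n t f k h0 h1]
  exact iter_mod H (dy_pos n).le k (T_buc H (by linarith) hf) (T_mod H (by linarith) hf hm)

theorem SiterN_le_T (H : Ctx p φ μ) (n : ℕ) {t : ℝ} (ht : 0 ≤ t) {f : Ed d → ℝ} (hf : BUC f)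
    (x : Ed d) : SiterN p φ μ n t f x ≤ TT p φ μ t f x := by
  obtain ⟨k, h0, h1⟩ := exists_steps n ht
  rw [SiterN_eq n t f k h0 h1]
  have hδ := dy_pos n
  have hr : 0 ≤ t - k * dy n := by linarith
  have h2 := iter_le H hδ.le k (T_buc H hr hf) x
  have h3 := T_semi H (s := k * dy n) (by positivity) hr hf x
  rw [add_sub_cancel] at h3
  exact h2.trans h3

theorem Smu_le_SiterN (H : Ctx p φ μ) (n : ℕ) {t : ℝ} (ht : 0 ≤ t) {f : Ed d → ℝ} (hf : BUC f)
    (x : Ed d) : Smu μ t f x ≤ SiterN p φ μ n t f x := by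
  obtain ⟨k, h0, h1⟩ := exists_steps n ht
  rw [SiterN_eq n t f k h0 h1]
  have hδ := dy_pos n
  have hr : 0 ≤ t - k * dy n := by linarith
  have hk : 0 ≤ k * dy n := by positivity
  have h2 := iter_ge0 H hδ.le k (T_buc H hr hf) x
  have h3 := Smu_nonexp H hk (Smu_buc H hr hf) (T_buc H hr hf) (x' := x) (x := x) (k := 0)
    (fun y => by simpa using Smu_le_T H hr hf _)
  rw [Smu_semi H hk hr hf, add_sub_cancel] at h3
  linarith

/-- two half steps are below one full step -/
theorem iter_double (H : Ctx p φ μ) {δ : ℝ} (hδ : 0 ≤ δ) (k : ℕ) {f : Ed d → ℝ} (hf : BUC f)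
    (x : Ed d) : (TT p φ μ δ)^[2 * k] f x ≤ (TT p φ μ (2 * δ))^[k] f x := by
  induction k generalizing x with
  | zero => simp
  | succ k ih =>
    rw [show 2 * (k + 1) = 2 * k + 1 + 1 by ring, Function.iterate_succ_apply',
      Function.iterate_succ_apply', Function.iterate_succ_apply']
    have h1 := T_semi H hδ hδ (iter_buc H hδ (2 * k) hf) x
    rw [← two_mul] at h1
    exact h1.trans (T_mono H (by positivity) (iter_buc H hδ _ hf)
      (iter_buc H (by positivity) _ hf) ih x)

theorem SiterN_anti (H : Ctx p φ μ) (n : ℕ) {t : ℝ} (ht : 0 ≤ t) {f : Ed d → ℝ} (hf : BUC f)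
    (x : Ed d) : SiterN p φ μ (n + 1) t f x ≤ SiterN p φ μ n t f x := by
  obtain ⟨k, h0, h1⟩ := exists_steps n ht
  rw [SiterN_eq n t f k h0 h1]
  have hδ := dy_pos (n + 1)
  have hr : 0 ≤ t - k * dy n := by linarith
  have e := dy_succ n
  by_cases hc : t < (2 * k + 1) * dy (n + 1)
  · rw [SiterN_eq (n + 1) t f (2 * k) (by push_cast; rw [e] at h0; linarith) (by push_cast; linarith)]
    have e2 : t - ((2 * k : ℕ) : ℝ) * dy (n + 1) = t - k * dy n := by rw [e]; push_cast; ring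
    rw [e2]
    have := iter_double H hδ.le k (T_buc H hr hf) x
    rwa [← e] at this
  · push Not at hc
    rw [SiterN_eq (n + 1) t f (2 * k + 1) (by push_cast; linarith)
      (by push_cast; rw [e] at h1; linarith)]
    have hr' : 0 ≤ t - ((2 * k + 1 : ℕ) : ℝ) * dy (n + 1) := by push_cast; linarith
    rw [Function.iterate_succ_apply]
    have h2 := iter_double H hδ.le k (T_buc H hδ.le (T_buc H hr' hf)) x
    rw [← e] at h2
    refine h2.trans (iter_mono H (dy_pos n).le k (T_buc H hδ.le (T_buc H hr' hf))
      (T_buc H hr hf) (fun y => ?_) x)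
    have h3 := T_semi H hδ.le hr' hf y
    have e2 : dy (n + 1) + (t - ((2 * k + 1 : ℕ) : ℝ) * dy (n + 1)) = t - k * dy n := by
      rw [e]; push_cast; ring
    rwa [e2] at h3

theorem SiterN_step (m n : ℕ) (hmn : m ≤ n) {t : ℝ} (ht : dy m ≤ t) (f : Ed d → ℝ) :
    SiterN p φ μ n t f = (TT p φ μ (dy n))^[2 ^ (n - m)] (SiterN p φ μ n (t - dy m) f) := by
  obtain ⟨k, h0, h1⟩ := exists_steps n (t := t - dy m) (by linarith)
  have e := pow_mul_dy n m hmn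
  rw [SiterN_eq n _ f k h0 h1, SiterN_eq n t f (2 ^ (n - m) + k) (by push_cast at e ⊢; linarith)
    (by push_cast at e ⊢; linarith), Function.iterate_add_apply]
  have e2 : t - ((2 ^ (n - m) + k : ℕ) : ℝ) * dy n = t - dy m - k * dy n := by
    rw [← e]; push_cast; ring
  rw [e2]

theorem SiterN_zero (H : Ctx p φ μ) (n : ℕ) {f : Ed d → ℝ} (hf : BUC f) :
    SiterN p φ μ n 0 f = f := by
  rw [SiterN_eq n 0 f 0 (by simp) (by simpa using dy_pos n)]
  simp [T_zero H hf]
end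

/-! ### The limit -/
section
variable {d : ℕ} {p : ℝ} {φ : ℝ≥0 → ℝ≥0∞} {μ : ℝ → Measure (Ed d)}

theorem SiterN_antitone (H : Ctx p φ μ) {t : ℝ} (ht : 0 ≤ t) {f : Ed d → ℝ} (hf : BUC f)
    (x : Ed d) : Antitone fun n => SiterN p φ μ n t f x :=
  antitone_nat_of_succ_le fun n => SiterN_anti H n ht hf x

theorem Slim_tendsto (H : Ctx p φ μ) {t : ℝ} (ht : 0 ≤ t) {f : Ed d → ℝ} (hf : BUC f)
    (x : Ed d) : Tendsto (fun n => SiterN p φ μ n t f x) atTop (𝓝 (Slim p φ μ t f x)) := by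
  refine tendsto_atTop_ciInf (SiterN_antitone H ht hf x) ⟨Smu μ t f x, ?_⟩
  rintro _ ⟨n, rfl⟩
  exact Smu_le_SiterN H n ht hf x

theorem Smu_le_Slim (H : Ctx p φ μ) {t : ℝ} (ht : 0 ≤ t) {f : Ed d → ℝ} (hf : BUC f)
    (x : Ed d) : Smu μ t f x ≤ Slim p φ μ t f x :=
  ge_of_tendsto' (Slim_tendsto H ht hf x) fun n => Smu_le_SiterN H n ht hf x

theorem Slim_le (H : Ctx p φ μ) (n : ℕ) {t : ℝ} (ht : 0 ≤ t) {f : Ed d → ℝ} (hf : BUC f)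
    (x : Ed d) : Slim p φ μ t f x ≤ SiterN p φ μ n t f x :=
  (SiterN_antitone H ht hf x).le_of_tendsto (Slim_tendsto H ht hf x) n

theorem Slim_le_T (H : Ctx p φ μ) {t : ℝ} (ht : 0 ≤ t) {f : Ed d → ℝ} (hf : BUC f)
    (x : Ed d) : Slim p φ μ t f x ≤ TT p φ μ t f x :=
  (Slim_le H 0 ht hf x).trans (SiterN_le_T H 0 ht hf x)

theorem Slim_mod (H : Ctx p φ μ) {t : ℝ} (ht : 0 ≤ t) {f : Ed d → ℝ} (hf : BUC f) {ε C : ℝ}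
    (hm : HasMod f ε C) : HasMod (Slim p φ μ t f) ε C := fun a b =>
  le_of_tendsto_of_tendsto' (Slim_tendsto H ht hf b)
    (((Slim_tendsto H ht hf a).add_const ε).add_const (C * ‖b - a‖))
    fun n => SiterN_mod H n ht hf hm a b

theorem Slim_buc (H : Ctx p φ μ) {t : ℝ} (ht : 0 ≤ t) {f : Ed d → ℝ} (hf : BUC f) :
    BUC (Slim p φ μ t f) := by
  refine ⟨?_, fun ε hε => ?_⟩
  · obtain ⟨M, hM⟩ := hf.bdd
    refine ⟨M, fun x => abs_le.2 ⟨?_, ?_⟩⟩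
    · exact (abs_le.1 (Smu_bdd H ht hM x)).1.trans (Smu_le_Slim H ht hf x)
    · exact (Slim_le_T H ht hf x).trans (abs_le.1 (T_bdd H ht hf hM x)).2
  · obtain ⟨C, hC, hm⟩ := hf.mod ε hε
    exact ⟨C, hC, Slim_mod H ht hf hm⟩

theorem Slim_C0 (H : Ctx p φ μ) {t : ℝ} (ht : 0 ≤ t) {f : Ed d → ℝ} (hf : IsC0 f) :
    IsC0 (Slim p φ μ t f) :=
  ⟨(Slim_buc H ht hf.buc).cont, tendsto_of_tendsto_of_tendsto_of_le_of_le (Smu_C0 H ht hf).2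
    (T_C0 H ht hf).2 (Smu_le_Slim H ht hf.buc) (Slim_le_T H ht hf.buc)⟩

theorem Slim_uniform (H : Ctx p φ μ) {t : ℝ} (ht : 0 ≤ t) {f : Ed d → ℝ} (hf : IsC0 f) {ε : ℝ}
    (hε : 0 < ε) : ∃ n₀, ∀ n ≥ n₀, ∀ x, SiterN p φ μ n t f x ≤ Slim p φ μ t f x + ε := by
  have h1 := Metric.tendsto_nhds.1 (Smu_C0 H ht hf).2 (ε / 2) (by positivity)
  have h2 := Metric.tendsto_nhds.1 (T_C0 H ht hf).2 (ε / 2) (by positivity)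
  obtain ⟨K, hK, hKs⟩ := mem_cocompact.1 (h1.and h2)
  have hu := Antitone.tendstoUniformlyOn_of_forall_tendsto hK
    (F := fun n => SiterN p φ μ n t f) (f := Slim p φ μ t f)
    (fun n => (SiterN_buc H n ht hf.buc).cont.continuousOn)
    (fun x _ => SiterN_antitone H ht hf.buc x) (Slim_buc H ht hf.buc).cont.continuousOn
    (fun x _ => Slim_tendsto H ht hf.buc x)
  obtain ⟨n₀, hn₀⟩ := eventually_atTop.1 (Metric.tendstoUniformlyOn_iff.1 hu ε hε)
  refine ⟨n₀, fun n hn x => ?_⟩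
  by_cases hx : x ∈ K
  · have := hn₀ n hn x hx
    rw [Real.dist_eq, abs_lt] at this
    linarith
  · obtain ⟨h3, h4⟩ := hKs hx
    rw [Real.dist_eq, sub_zero, abs_lt] at h3 h4
    have := SiterN_le_T H n ht hf.buc x
    have := Smu_le_Slim H ht hf.buc x
    linarith

/-! ### short time behaviour -/

theorem Wp_small (H : Ctx p φ μ) {ε : ℝ} (hε : 0 < ε) : ∃ η > 0, ∀ h, 0 ≤ h → h < η →
    Wp p (μ h) (Measure.dirac 0) < ε := by
  obtain ⟨η, hη, h⟩ := Metric.eventually_nhds_iff_ball.1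
    (eventually_nhdsWithin_iff.1 (H.hμ0.eventually (gt_mem_nhds hε)))
  refine ⟨η, hη, fun s hs hs' => ?_⟩
  rcases hs.eq_or_lt with rfl | hs0
  · rw [H.hμ.1, Wp_self H.hp (memPp_dirac H.hp)]
    exact hε
  · exact h s (by rw [Metric.mem_ball, Real.dist_eq, sub_zero, abs_of_pos hs0]; exact hs') hs0

theorem Smu_short_aux (H : Ctx p φ μ) {F : Ed d → ℝ} (hF : BUC F) {ε : ℝ} (hε : 0 < ε) :
    ∃ η > 0, ∀ h, 0 ≤ h → h < η → ∀ x, F x ≤ Smu μ h F x + ε := by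
  obtain ⟨C, hC, hm⟩ := hF.mod (ε / 2) (by positivity)
  obtain ⟨M, hM⟩ := hF.bdd
  obtain ⟨η, hη, hW⟩ := Wp_small H (ε := ε / 2 / (C + 1)) (by positivity)
  refine ⟨η, hη, fun h hh hh' x => ?_⟩
  have := H.prob hh
  have h1 := hW h hh hh'
  rw [lt_div_iff₀ (by positivity)] at h1
  have h0 := Wp_nonneg (p := p) (μ h) (Measure.dirac (0 : Ed d))
  have hFc := hF.cont
  have h2 := coupling_bound H.hp (H.mem hh) (memPp_dirac H.hp) hC (le_refl (0 : ℝ)) hFc hM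
    (G := fun a => F a + ε / 2) (by fun_prop) (M' := M + ε / 2)
    (fun x => (abs_add_le _ _).trans (add_le_add (hM x) (by rw [abs_of_pos (by positivity)])))
    (fun a b => by have := hm a b; linarith) x
  rw [integral_add (hF.integrable x) (integrable_const _), integral_dirac] at h2
  simp only [integral_const, probReal_univ, smul_eq_mul, one_mul, add_zero, zero_mul] at h2
  unfold Smu
  nlinarith

theorem Smu_short (H : Ctx p φ μ) {F : Ed d → ℝ} (hF : BUC F) {ε : ℝ} (hε : 0 < ε) :
    ∃ η > 0, ∀ h, 0 ≤ h → h < η → ∀ x, |Smu μ h F x - F x| ≤ ε := by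
  obtain ⟨η1, h1, H1⟩ := Smu_short_aux H hF hε
  obtain ⟨η2, h2, H2⟩ := Smu_short_aux H hF.neg hε
  refine ⟨min η1 η2, lt_min h1 h2, fun h hh hh' x => ?_⟩
  have a := H1 h hh (hh'.trans_le (min_le_left _ _)) x
  have b := H2 h hh (hh'.trans_le (min_le_right _ _)) x
  unfold Smu at *
  rw [integral_neg] at b
  rw [abs_le]
  constructor <;> linarith

theorem T_short (H : Ctx p φ μ) {F : Ed d → ℝ} (hF : BUC F) {ε : ℝ} (hε : 0 < ε) :
    ∃ η > 0, ∀ h, 0 ≤ h → h < η → ∀ x, F x - ε ≤ Smu μ h F x ∧ TT p φ μ h F x ≤ F x + ε := by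
  obtain ⟨η1, h1, H1⟩ := Smu_short H hF (ε := ε / 3) (by positivity)
  obtain ⟨C, hC, hm⟩ := hF.mod (ε / 3) (by positivity)
  obtain ⟨M, hM⟩ := hF.bdd
  obtain ⟨Φ, hΦ, hconj⟩ := exists_conj_bound H.hp H.hφ hC
  refine ⟨min η1 (ε / 3 / (Φ + 1)), lt_min h1 (by positivity), fun h hh hh' x => ?_⟩
  have a := abs_le.1 (H1 h hh (hh'.trans_le (min_le_left _ _)) x)
  have b := hh'.trans_le (min_le_right _ _)
  rw [lt_div_iff₀ (by positivity)] at b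
  refine ⟨by linarith, ?_⟩
  rcases hh.eq_or_lt with rfl | hh0
  · rw [T_zero H hF]; linarith
  have := H.prob hh
  have hFc := hF.cont
  have h2 := Sop_upper H.hp H.hφ (H.mem hh) hh0 hF (G := fun a => F a + ε / 3) (by fun_prop)
    (M' := M + ε / 3)
    (fun x => (abs_add_le _ _).trans (add_le_add (hM x) (by rw [abs_of_pos (by positivity)])))
    hC hconj (fun a b => by have := hm a b; linarith) x
  rw [integral_add (hF.integrable x) (integrable_const _)] at h2
  simp only [integral_const, probReal_univ, smul_eq_mul, one_mul] at h2
  unfold Smu at a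
  unfold TT
  nlinarith

theorem SiterN_steps (n j : ℕ) {t : ℝ} (ht : j * dy n ≤ t) (f : Ed d → ℝ) :
    SiterN p φ μ n t f = (TT p φ μ (dy n))^[j] (SiterN p φ μ n (t - j * dy n) f) := by
  obtain ⟨k, h0, h1⟩ := exists_steps n (t := t - j * dy n) (by linarith)
  rw [SiterN_eq n _ f k h0 h1, SiterN_eq n t f (j + k) (by push_cast; linarith)
    (by push_cast; linarith), Function.iterate_add_apply]
  have e2 : t - ((j + k : ℕ) : ℝ) * dy n = t - j * dy n - k * dy n := by
    push_cast; ring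
  rw [e2]

theorem Slim_cont (H : Ctx p φ μ) {f : Ed d → ℝ} (hf : BUC f) {ε : ℝ} (hε : 0 < ε) :
    ∃ η > 0, ∀ s t, 0 ≤ s → s ≤ t → t - s < η → ∀ x,
      |Slim p φ μ t f x - Slim p φ μ s f x| ≤ ε := by
  obtain ⟨η, hη, h1⟩ := T_short H hf (ε := ε / 2) (by positivity)
  refine ⟨η / 2, by positivity, fun s t hs hst hη2 x => ?_⟩
  have ht : 0 ≤ t := hs.trans hst
  refine le_of_tendsto (((Slim_tendsto H ht hf x).sub (Slim_tendsto H hs hf x)).abs) ?_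
  filter_upwards [dy_tendsto.eventually (gt_mem_nhds (half_pos hη))] with n hn
  obtain ⟨k, h0, h2⟩ := exists_steps n hs
  have hδ := dy_pos n
  have key : ∀ r, 0 ≤ r → r < η → ∀ y, |SiterN p φ μ n r f y - f y| ≤ ε / 2 := by
    intro r hr hr' y
    obtain ⟨a, b⟩ := h1 r hr hr' y
    have := SiterN_le_T H n hr hf y
    have := Smu_le_SiterN H n hr hf y
    rw [abs_le]
    constructor <;> linarith
  rw [SiterN_steps n k h0, SiterN_steps n k (h0.trans hst)]
  have hs' : 0 ≤ s - k * dy n := by linarith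
  have ht' : 0 ≤ t - k * dy n := by linarith
  have A := key _ hs' (by linarith)
  have B := key _ ht' (by linarith)
  have a1 := iter_nonexp H hδ.le k (SiterN_buc H n hs' hf) (SiterN_buc H n ht' hf) (e := ε)
    (fun y => by have := abs_le.1 (A y); have := abs_le.1 (B y); linarith) x
  have a2 := iter_nonexp H hδ.le k (SiterN_buc H n ht' hf) (SiterN_buc H n hs' hf) (e := ε)
    (fun y => by have := abs_le.1 (A y); have := abs_le.1 (B y); linarith) x
  rw [abs_le]
  constructor <;> linarith

theorem Slim_zero (H : Ctx p φ μ) {f : Ed d → ℝ} (hf : BUC f) : Slim p φ μ 0 f = f := by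
  funext x
  simp [Slim, SiterN_zero H _ hf]

/-! ### dynamic programming inequalities -/

theorem Slim_dpp_le (H : Ctx p φ μ) {f : Ed d → ℝ} (hf : IsC0 f) (m : ℕ) {t : ℝ} (ht : dy m ≤ t)
    (x : Ed d) : Slim p φ μ t f x ≤ TT p φ μ (dy m) (Slim p φ μ (t - dy m) f) x := by
  have hδ := dy_pos m
  have ht0 : 0 ≤ t - dy m := by linarith
  refine le_of_forall_pos_le_add fun ε hε => ?_
  obtain ⟨n₀, hn⟩ := Slim_uniform H ht0 hf hε
  obtain ⟨n, hn0, hnm⟩ : ∃ n, n₀ ≤ n ∧ m ≤ n := ⟨max n₀ m, le_max_left _ _, le_max_right _ _⟩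
  have h1 := Slim_le H n (by linarith : 0 ≤ t) hf.buc x
  rw [SiterN_step m n hnm ht f] at h1
  have h2 := iter_le H (dy_pos n).le (2 ^ (n - m)) (SiterN_buc H n ht0 hf.buc) x
  rw [pow_mul_dy n m hnm] at h2
  have h3 := T_nonexp H hδ.le (SiterN_buc H n ht0 hf.buc) (Slim_buc H ht0 hf.buc) (hn n hn0) x
  linarith

theorem Slim_dpp_ge (H : Ctx p φ μ) {f : Ed d → ℝ} (hf : IsC0 f) (m : ℕ) {t : ℝ} (ht : dy m ≤ t)
    {b : Ed d} {c : ℝ} (hc : 0 ≤ c) (hb : Pen φ ‖b‖ c) (x : Ed d) :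
    Smu μ (dy m) (Slim p φ μ (t - dy m) f) (x + dy m • b) - dy m * c ≤ Slim p φ μ t f x := by
  have hδ := dy_pos m
  have ht0 : 0 ≤ t - dy m := by linarith
  refine ge_of_tendsto (Slim_tendsto H (by linarith : 0 ≤ t) hf.buc x) ?_
  filter_upwards [eventually_ge_atTop m] with n hnm
  rw [SiterN_step m n hnm ht f]
  have h2 := iter_ge H (dy_pos n).le (2 ^ (n - m)) (SiterN_buc H n ht0 hf.buc) hc hb x
  rw [pow_mul_dy n m hnm] at h2
  have h3 := Smu_nonexp H hδ.le (Slim_buc H ht0 hf.buc) (SiterN_buc H n ht0 hf.buc) (k := 0)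
    (x' := x + dy m • b) (x := x + dy m • b)
    (fun y => by simpa using Slim_le H n ht0 hf.buc _)
  linarith
end

/-! ### Viscosity inequalities -/
section
variable {d : ℕ} {p : ℝ} {φ : ℝ≥0 → ℝ≥0∞} {μ : ℝ → Measure (Ed d)}

theorem deriv_expand {F : Type*} [NormedAddCommGroup F] [NormedSpace ℝ F] {g : ℝ → F} {L : F}
    {a : ℝ} (h : HasDerivAt g L a) {ε : ℝ} (hε : 0 < ε) :
    ∃ η > 0, ∀ s, |s| < η → ‖g (a + s) - g a - s • L‖ ≤ ε * |s| := by
  have h1 := (hasDerivAt_iff_isLittleO_nhds_zero.1 h).bound hε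
  obtain ⟨η, hη, h2⟩ := Metric.eventually_nhds_iff_ball.1 h1
  refine ⟨η, hη, fun s hs => ?_⟩
  have := h2 s (by simpa [Metric.mem_ball] using hs)
  simpa using this

theorem C0_apply_le (F : C₀(Ed d, ℝ)) (y : Ed d) : |F y| ≤ ‖F‖ := by
  rw [← ZeroAtInftyContinuousMap.norm_toBCF_eq_norm]
  exact F.toBCF.norm_coe_le_norm y

theorem test_expand {v : ℝ → C₀(Ed d, ℝ)} {e : C₀(Ed d, ℝ)} {t : ℝ} (h : HasDerivAt v e t) {ε : ℝ}
    (hε : 0 < ε) : ∃ η > 0, ∀ s, 0 < s → s < η → ∀ y,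
      |v (t - s) y - (v t y - s * e y)| ≤ ε * s := by
  obtain ⟨η, hη, h1⟩ := deriv_expand h hε
  refine ⟨η, hη, fun s hs hs' y => ?_⟩
  have h2 := h1 (-s) (by rw [abs_neg, abs_of_pos hs]; exact hs')
  rw [abs_neg, abs_of_pos hs] at h2
  have h3 := (C0_apply_le _ y).trans h2
  have e1 : (v (t + -s) - v t - (-s) • e) y = v (t - s) y - (v t y - s * e y) := by
    rw [← sub_eq_add_neg]
    simp only [ZeroAtInftyContinuousMap.sub_apply, ZeroAtInftyContinuousMap.smul_apply, smul_eq_mul]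
    ring
  rwa [e1] at h3

theorem gen_expand {w Av : Ed d → ℝ} (h : HasGenerator μ w Av) {ε : ℝ} (hε : 0 < ε) :
    ∃ η > 0, ∀ s, 0 < s → s < η → ∀ y, |Smu μ s w y - w y - s * Av y| ≤ ε * s := by
  obtain ⟨η, hη, h1⟩ := Metric.eventually_nhds_iff_ball.1
    (eventually_nhdsWithin_iff.1 (Metric.tendstoUniformly_iff.1 h ε hε))
  refine ⟨η, hη, fun s hs hs' y => ?_⟩
  have h2 := h1 s (by rw [Metric.mem_ball, Real.dist_eq, sub_zero, abs_of_pos hs]; exact hs') hs y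
  rw [dist_comm, Real.dist_eq] at h2
  have e1 : Smu μ s w y - w y - s * Av y = ((Smu μ s w y - w y) / s - Av y) * s := by
    field_simp
  rw [e1, abs_mul, abs_of_pos hs]
  exact mul_le_mul_of_nonneg_right h2.le hs.le

theorem gen_cont (H : Ctx p φ μ) {w Av : Ed d → ℝ} (hw : BUC w) (h : HasGenerator μ w Av) :
    Continuous Av := by
  refine TendstoUniformly.continuous h (Eventually.frequently ?_)
  filter_upwards [self_mem_nhdsWithin] with s hs
  exact ((Smu_buc H (le_of_lt hs) hw).cont.sub hw.cont).div_const s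

theorem grad_expand {w : Ed d → ℝ} (hw : ContDiff ℝ 1 w) (x b : Ed d) {ε : ℝ} (hε : 0 < ε) :
    ∃ η > 0, ∀ s, 0 < s → s < η →
      |w (x + s • b) - w x - s * inner ℝ (gradient w x) b| ≤ ε * s := by
  have h1 := ((hw.differentiable one_ne_zero x).hasGradientAt.hasFDerivAt).hasLineDerivAt b
  have h2 : HasDerivAt (fun s : ℝ => w (x + s • b)) (inner ℝ (gradient w x) b) 0 := h1
  obtain ⟨η, hη, h3⟩ := deriv_expand h2 hε
  refine ⟨η, hη, fun s hs hs' => ?_⟩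
  have h4 := h3 s (by rw [abs_of_pos hs]; exact hs')
  simpa [abs_of_pos hs] using h4

theorem dy_small {η : ℝ} (hη : 0 < η) : ∀ᶠ m in atTop, dy m < η :=
  dy_tendsto.eventually (gt_mem_nhds hη)

theorem super_dir (H : Ctx p φ μ) {f : Ed d → ℝ} (hf : IsC0 f) {t : ℝ} (ht : 0 < t) (x : Ed d)
    {v : ℝ → C₀(Ed d, ℝ)} {e : C₀(Ed d, ℝ)} (hv : HasDerivAt v e t) (hw : ContDiff ℝ 1 (v t))
    (hle : ∀ s, 0 < s → ∀ y, v s y ≤ Slim p φ μ s f y) (heq : v t x = Slim p φ μ t f x)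
    {Av : Ed d → ℝ} (hA : HasGenerator μ (v t) Av) {b : Ed d} {c : ℝ} (hc : 0 ≤ c)
    (hb : Pen φ ‖b‖ c) : Av x + inner ℝ (gradient (v t) x) b - c ≤ e x := by
  have hwB : BUC (v t) := (IsC0.coe _).buc
  have heB : BUC e := (IsC0.coe _).buc
  refine le_of_forall_pos_le_add fun ε' hε' => ?_
  obtain ⟨ε, hε, hεε⟩ : ∃ ε, 0 < ε ∧ 6 * ε = ε' := ⟨ε' / 6, by positivity, by ring⟩
  obtain ⟨η1, hη1, E1⟩ := test_expand hv hε
  obtain ⟨η2, hη2, E2⟩ := gen_expand hA hε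
  obtain ⟨η3, hη3, E3⟩ := grad_expand hw x b hε
  obtain ⟨η4, hη4, E4⟩ := Smu_short H heB hε
  have hx : Tendsto (fun m => x + dy m • b) atTop (𝓝 x) := by
    have := (dy_tendsto.smul_const b).const_add x
    simpa using this
  have hA' := ((gen_cont H hwB hA).tendsto x).comp hx
  have he' := ((IsC0.coe e).1.tendsto x).comp hx
  obtain ⟨m, m0, m1, m2, m3, m4, m5, m6⟩ := ((dy_small ht).and ((dy_small hη1).and
    ((dy_small hη2).and ((dy_small hη3).and ((dy_small hη4).and
    ((hA'.eventually (lt_mem_nhds (sub_lt_self _ hε))).and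
    (he'.eventually (gt_mem_nhds (lt_add_of_pos_right _ hε)))))))) ).exists
  simp only [Function.comp_apply] at m5 m6
  have hδ := dy_pos m
  generalize hh : dy m = h at *
  have ht0 : 0 < t - h := by linarith
  have h1 := Slim_dpp_ge H hf m (t := t) (by linarith) hc hb x
  rw [hh, ← heq] at h1
  have hvB : BUC (v (t - h)) := (IsC0.coe _).buc
  have h2 := Smu_nonexp H hδ.le hvB (Slim_buc H ht0.le hf.buc) (k := 0)
    (x' := x + h • b) (x := x + h • b) (fun y => by simpa using hle _ ht0 _)
  have h3 : Smu μ h (v t) (x + h • b) ≤ Smu μ h (v (t - h)) (x + h • b) + ε * h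
      + h * Smu μ h e (x + h • b) := by
    have := H.prob hδ.le
    have i1 := hvB.integrable (ν := μ h) (x + h • b)
    have i2 := heB.integrable (ν := μ h) (x + h • b)
    have : ∫ y, v t (x + h • b + y) ∂(μ h) ≤ ∫ y, (v (t - h) (x + h • b + y) + ε * h +
        h * e (x + h • b + y)) ∂(μ h) := by
      refine integral_mono (hwB.integrable _) ((i1.add (integrable_const _)).add
        (i2.const_mul h)) fun y => ?_
      have := abs_le.1 (E1 h hδ m1 (x + h • b + y))
      dsimp only
      linarith
    have i3 : Integrable (fun y => v (t - h) (x + h • b + y) + ε * h) (μ h) :=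
      i1.add (integrable_const _)
    rw [integral_add i3 (i2.const_mul h), integral_add i1 (integrable_const _),
      integral_const_mul h (fun y => e (x + h • b + y))] at this
    simpa [Smu] using this
  have h4 := abs_le.1 (E2 h hδ m2 (x + h • b))
  have h5 := abs_le.1 (E3 h hδ m3)
  have h6 := abs_le.1 (E4 h hδ.le m4 (x + h • b))
  have k1 : h * (Av x - ε) ≤ h * Av (x + h • b) := mul_le_mul_of_nonneg_left m5.le hδ.le
  have k2 : h * Smu μ h e (x + h • b) ≤ h * (e x + ε + ε) :=
    mul_le_mul_of_nonneg_left (by linarith) hδ.le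
  have k3 : h * (Av x + inner ℝ (gradient (v t) x) b - c) ≤ h * (e x + ε') := by
    rw [← hεε]
    nlinarith
  exact le_of_mul_le_mul_left k3 hδ

theorem super_main (H : Ctx p φ μ) {f : Ed d → ℝ} (hf : IsC0 f) {t : ℝ} (ht : 0 < t) (x : Ed d)
    {v : ℝ → C₀(Ed d, ℝ)} {e : C₀(Ed d, ℝ)} (hv : HasDerivAt v e t) (hw : ContDiff ℝ 1 (v t))
    (hle : ∀ s, 0 < s → ∀ y, v s y ≤ Slim p φ μ s f y) (heq : v t x = Slim p φ μ t f x)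
    {Av : Ed d → ℝ} (hA : HasGenerator μ (v t) Av) :
    (Av x : EReal) + (phiStar φ ‖gradient (⇑(v t)) x‖₊ : EReal) ≤ (e x : EReal) := by
  have key := fun (b : Ed d) (c : ℝ) (hc : 0 ≤ c) (hb : Pen φ ‖b‖ c) =>
    super_dir H hf ht x hv hw hle heq hA hc hb
  have h0 : 0 ≤ e x - Av x := by
    have := key 0 0 le_rfl (Pen_zero H.hφ)
    simp at this
    linarith
  have h1 : phiStar φ ‖gradient (⇑(v t)) x‖₊ ≤ ENNReal.ofReal (e x - Av x) := by
    refine iSup_le fun r => ?_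
    rw [tsub_le_iff_right]
    by_cases hr : φ r = ∞
    · simp [hr]
    generalize hg : gradient (⇑(v t)) x = g at *
    by_cases hg0 : g = 0
    · simp [hg0]
    have hgn : ‖g‖ ≠ 0 := norm_ne_zero_iff.2 hg0
    have hbn : ‖((r : ℝ) / ‖g‖) • g‖ = r := by
      rw [norm_smul, Real.norm_of_nonneg (by positivity)]
      field_simp
    have h2 := key (((r : ℝ) / ‖g‖) • g) (φ r).toReal ENNReal.toReal_nonneg (by
      unfold Pen
      rw [hbn, Real.toNNReal_coe, ENNReal.ofReal_toReal hr])
    rw [inner_smul_right, real_inner_self_eq_norm_sq] at h2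
    have e1 : (r : ℝ) / ‖g‖ * ‖g‖ ^ 2 = r * ‖g‖ := by field_simp
    rw [e1] at h2
    rw [← ENNReal.ofReal_toReal hr, ← ENNReal.ofReal_add h0 ENNReal.toReal_nonneg,
      ← ENNReal.ofReal_coe_nnreal]
    refine ENNReal.ofReal_le_ofReal ?_
    push_cast
    linarith
  have h2 : (phiStar φ ‖gradient (⇑(v t)) x‖₊ : EReal) ≤ ((e x - Av x : ℝ) : EReal) := by
    have := EReal.coe_ennreal_le_coe_ennreal_iff.2 h1
    rwa [EReal.coe_ennreal_ofReal, max_eq_left h0] at this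
  calc (Av x : EReal) + (phiStar φ ‖gradient (⇑(v t)) x‖₊ : EReal)
      ≤ (Av x : EReal) + ((e x - Av x : ℝ) : EReal) := add_le_add le_rfl h2
    _ = (e x : EReal) := by rw [← EReal.coe_add]; congr 1; ring
end

section
variable {d : ℕ} {p : ℝ} {φ : ℝ≥0 → ℝ≥0∞} {μ : ℝ → Measure (Ed d)}

theorem grad_bound {w : Ed d → ℝ} (hw : IsC01 w) : ∃ L, 0 ≤ L ∧ ∀ x, ‖fderiv ℝ w x‖ ≤ L := by
  have hc : Continuous fun x => fderiv ℝ w x := hw.2.1.continuous_fderiv one_ne_zero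
  have hn : ∀ x, ‖fderiv ℝ w x‖ = ‖gradient w x‖ := fun x => by
    unfold gradient
    rw [LinearIsometryEquiv.norm_map]
  have h0 := hw.2.2.norm
  rw [norm_zero] at h0
  let F : C₀(Ed d, ℝ) := ⟨⟨fun x => ‖fderiv ℝ w x‖, hc.norm⟩, by simpa only [hn] using h0⟩
  refine ⟨‖F‖, norm_nonneg _, fun x => (le_abs_self _).trans (C0_apply_le F x)⟩

theorem local_upper (hp : 1 < p) {w : Ed d → ℝ} (hw : IsC01 w) (x : Ed d) {ε : ℝ} (hε : 0 < ε) :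
    ∃ L δ h₀ : ℝ, 0 ≤ L ∧ 0 < δ ∧ 0 < h₀ ∧ ∀ h, 0 < h → h < h₀ → ∀ a b,
      w b ≤ w a + (‖gradient w x‖ + ε) * ‖b - a‖ + ε * h * (‖b - a‖ / h) ^ p
        + h * L * min 1 (‖a - x‖ / δ) := by
  obtain ⟨L, hL, hLb⟩ := grad_bound hw
  have hdiff : Differentiable ℝ w := hw.2.1.differentiable one_ne_zero
  have hc : Continuous fun x => fderiv ℝ w x := hw.2.1.continuous_fderiv one_ne_zero
  have hn : ∀ x, ‖fderiv ℝ w x‖ = ‖gradient w x‖ := fun x => by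
    unfold gradient
    rw [LinearIsometryEquiv.norm_map]
  have hlip : ∀ a b, w b ≤ w a + L * ‖b - a‖ := fun a b => by
    have := convex_univ.norm_image_sub_le_of_norm_fderiv_le (𝕜 := ℝ) (f := w) (x := a) (y := b)
      (fun y _ => hdiff y) (fun y _ => hLb y) (mem_univ a) (mem_univ b)
    have := (le_abs_self _).trans this
    linarith
  obtain ⟨δ', hδ', hball⟩ := Metric.eventually_nhds_iff_ball.1
    ((hc.norm.tendsto x).eventually (gt_mem_nhds (lt_add_of_pos_right _ hε)))
  obtain ⟨R, hR1, hR⟩ := rpow_dominates hp L hε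
  have hR0 : 0 < R := by linarith
  have hδ : 0 < δ' / 2 := by positivity
  refine ⟨L * R, δ' / 2, δ' / 2 / R, by positivity, hδ, by positivity, fun h hh hh' a b => ?_⟩
  rw [lt_div_iff₀ hR0] at hh'
  have hr := norm_nonneg (b - a)
  have hm : 0 ≤ min 1 (‖a - x‖ / (δ' / 2)) := by positivity
  have t1 : 0 ≤ h * (L * R) * min 1 (‖a - x‖ / (δ' / 2)) := by positivity
  have t2 : 0 ≤ ε * h * (‖b - a‖ / h) ^ p := by positivity
  have t3 : 0 ≤ (‖gradient w x‖ + ε) * ‖b - a‖ := by positivity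
  by_cases hc1 : R ≤ ‖b - a‖ / h
  · have h1 := hR _ hc1
    have h2 := hlip a b
    have h3 : L * ‖b - a‖ = h * (L * (‖b - a‖ / h)) := by field_simp
    have h4 : h * (L * (‖b - a‖ / h)) ≤ h * (ε * (‖b - a‖ / h) ^ p) :=
      mul_le_mul_of_nonneg_left h1 hh.le
    nlinarith
  · push Not at hc1
    rw [div_lt_iff₀ hh] at hc1
    by_cases hc2 : ‖a - x‖ < δ' / 2
    · have ha : a ∈ Metric.ball x δ' := by
        rw [mem_ball_iff_norm]; linarith
      have hb : b ∈ Metric.ball x δ' := by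
        rw [mem_ball_iff_norm]
        have : ‖b - x‖ ≤ ‖b - a‖ + ‖a - x‖ := norm_sub_le_norm_sub_add_norm_sub b a x
        nlinarith
      have := (convex_ball x δ').norm_image_sub_le_of_norm_fderiv_le (𝕜 := ℝ) (f := w)
        (fun y _ => hdiff y) (fun y hy => (hball y hy).le) ha hb
      rw [hn] at this
      have := (le_abs_self _).trans this
      linarith
    · push Not at hc2
      have e1 : min 1 (‖a - x‖ / (δ' / 2)) = 1 := by
        rw [min_eq_left]
        rwa [one_le_div hδ]
      rw [e1] at t1 ⊢
      have h2 := hlip a b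
      have h3 : L * ‖b - a‖ ≤ L * (R * h) := mul_le_mul_of_nonneg_left hc1.le hL
      nlinarith

theorem buc_min (x : Ed d) {δ : ℝ} (hδ : 0 < δ) : BUC fun a : Ed d => min 1 (‖a - x‖ / δ) := by
  have hb : ∀ a : Ed d, 0 ≤ min 1 (‖a - x‖ / δ) := fun a => by positivity
  refine ⟨⟨1, fun a => ?_⟩, fun ε hε => ⟨1 / δ, by positivity, fun a b => ?_⟩⟩
  · rw [abs_of_nonneg (hb a)]
    exact min_le_left _ _
  · have h1 : ‖b - x‖ ≤ ‖b - a‖ + ‖a - x‖ := norm_sub_le_norm_sub_add_norm_sub b a x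
    have h2 : ‖b - x‖ / δ ≤ ‖a - x‖ / δ + 1 / δ * ‖b - a‖ := by
      rw [one_div_mul_eq_div, ← add_div]
      gcongr
      linarith
    have h3 : 0 ≤ 1 / δ * ‖b - a‖ := by positivity
    beta_reduce
    rcases le_total 1 (‖a - x‖ / δ) with h | h
    · have := min_le_left 1 (‖b - x‖ / δ)
      rw [min_eq_left h]
      linarith
    · have := min_le_right 1 (‖b - x‖ / δ)
      rw [min_eq_right h]
      linarith

theorem sub_main_real (H : Ctx p φ μ) {f : Ed d → ℝ} (hf : IsC0 f) {t : ℝ} (ht : 0 < t) (x : Ed d)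
    {v : ℝ → C₀(Ed d, ℝ)} {e : C₀(Ed d, ℝ)} (hv : HasDerivAt v e t) (hw : IsC01 (v t))
    (hle : ∀ s, 0 < s → ∀ y, Slim p φ μ s f y ≤ v s y) (heq : v t x = Slim p φ μ t f x)
    {Av : Ed d → ℝ} (hA : HasGenerator μ (v t) Av) {Φ R ε₀ : ℝ} (hR : 0 ≤ R)
    (hε₀ : 0 < ε₀)
    (hΦ : ∀ ε, 0 ≤ ε → ε ≤ ε₀ → ∀ r k : ℝ, 0 ≤ r → 0 ≤ k → Pen φ r k →
        (‖gradient (v t) x‖ + ε) * r + ε * r ^ p - k ≤ Φ + ε * (R + R ^ p)) :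
    e x ≤ Av x + Φ := by
  have hwB : BUC (v t) := (IsC0.coe _).buc
  have heB : BUC e := (IsC0.coe _).buc
  have hp := H.hp
  have hRp : 0 ≤ R + R ^ p := by positivity
  have main : ∀ ε, 0 < ε → 2 * ε ≤ ε₀ → e x ≤ Av x + Φ + ε * (5 + 2 * (R + R ^ p)) := by
    intro ε hε hεε
    obtain ⟨L, δ, h₀, hL, hδ, hh₀, hloc⟩ := local_upper hp hw x hε
    obtain ⟨K, hK, hKm⟩ := heB.mod ε hε
    have hmB := buc_min x hδ
    obtain ⟨η1, hη1, E1⟩ := test_expand hv hε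
    obtain ⟨η2, hη2, E2⟩ := gen_expand hA hε
    obtain ⟨η3, hη3, E3⟩ := Smu_short H heB hε
    obtain ⟨η4, hη4, E4⟩ := Smu_short H hmB (ε := ε / (L + 1)) (by positivity)
    obtain ⟨n, n0, n1, n2, n3, n4, n5, n6⟩ := ((dy_small ht).and ((dy_small hη1).and
      ((dy_small hη2).and ((dy_small hη3).and ((dy_small hη4).and ((dy_small hh₀).and
      (dy_small (η := ε / (K + 1)) (by positivity)))))))).exists
    have hh := dy_pos n
    have h1 := Slim_dpp_le H hf n (t := t) n0.le x
    generalize dy n = h at *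
    have ht0 : 0 < t - h := by linarith
    rw [lt_div_iff₀ (by positivity)] at n6
    have hvB : BUC (v (t - h)) := (IsC0.coe _).buc
    rw [← heq] at h1
    have h2 := T_mono H hh.le (Slim_buc H ht0.le hf.buc) hvB (hle _ ht0) x
    have hPr := H.prob hh.le
    -- the comparison function
    have c1 := hwB.cont
    have c2 := heB.cont
    obtain ⟨M, hM⟩ := hvB.bdd
    obtain ⟨M1, hM1⟩ := hwB.bdd
    obtain ⟨M2, hM2⟩ := heB.bdd
    have i1 := hwB.integrable (ν := μ h) x
    have i2 := (heB.integrable (ν := μ h) x).const_mul h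
    have i3 := (hmB.integrable (ν := μ h) x).const_mul (h * L)
    have hG : ∫ y, (v t (x + y) - h * e (x + y) + 2 * ε * h
        + h * L * min 1 (‖x + y - x‖ / δ)) ∂(μ h) = Smu μ h (v t) x - h * Smu μ h e x + 2 * ε * h
        + h * L * Smu μ h (fun a => min 1 (‖a - x‖ / δ)) x := by
      have j1 : Integrable (fun y => v t (x + y) - h * e (x + y)) (μ h) := i1.sub i2
      have j2 : Integrable (fun y => v t (x + y) - h * e (x + y) + 2 * ε * h) (μ h) :=
        j1.add (integrable_const _)
      rw [integral_add j2 i3, integral_add j1 (integrable_const _), integral_sub i1 i2,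
        integral_const_mul h (fun y => e (x + y)),
        integral_const_mul (h * L) (fun y => min 1 (‖x + y - x‖ / δ))]
      simp [Smu]
    have hD : 0 ≤ ε * h / h ^ p := by positivity
    have h3 : TT p φ μ h (v (t - h)) x ≤ Smu μ h (v t) x - h * Smu μ h e x + 2 * ε * h
        + h * L * Smu μ h (fun a => min 1 (‖a - x‖ / δ)) x + h * (Φ + 2 * ε * (R + R ^ p)) := by
      refine Sop_le hp H.hφ (H.mem hh.le) fun ν c hν hc hpen => ?_
      have h4 := coupling_bound hp (H.mem hh.le) hν (C := ‖gradient (v t) x‖ + 2 * ε)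
        (D := ε * h / h ^ p) (by positivity) hD hvB.cont hM
        (G := fun a => v t a - h * e a + 2 * ε * h + h * L * min 1 (‖a - x‖ / δ))
        (by fun_prop) (M' := M1 + h * M2 + 2 * ε * h + h * L * 1)
        (fun a => by
          refine (abs_add_le _ _).trans (add_le_add ((abs_add_le _ _).trans (add_le_add
            ((abs_sub _ _).trans (add_le_add (hM1 a) ?_)) ?_)) ?_)
          · rw [abs_mul, abs_of_pos hh]
            exact mul_le_mul_of_nonneg_left (hM2 a) hh.le
          · rw [abs_of_pos (by positivity)]
          · rw [abs_of_nonneg (by positivity)]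
            exact mul_le_mul_of_nonneg_left (min_le_left _ _) (by positivity))
        (fun a b => by
          have k1 := abs_le.1 (E1 h hh n1 b)
          have k2 := hloc h hh n5 a b
          have k3 := mul_le_mul_of_nonneg_left (hKm b a) hh.le
          rw [norm_sub_rev] at k3
          have k4 : ε * h * (‖b - a‖ / h) ^ p = ε * h / h ^ p * ‖b - a‖ ^ p := by
            rw [Real.div_rpow (norm_nonneg _) hh.le]; ring
          rw [k4] at k2
          have k5 : h * K * ‖b - a‖ ≤ ε * ‖b - a‖ :=
            mul_le_mul_of_nonneg_right (by nlinarith) (norm_nonneg _)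
          nlinarith) x
      rw [hG] at h4
      have hW := Wp_nonneg (p := p) (μ h) ν
      rw [phit_pos_iff hh] at hpen
      have h5 := hΦ (2 * ε) (by positivity) hεε _ _ (by positivity) (by positivity) hpen
      have h6 := mul_le_mul_of_nonneg_left h5 hh.le
      have e1 : h * ((‖gradient (v t) x‖ + 2 * ε) * (Wp p (μ h) ν / h)
          + 2 * ε * (Wp p (μ h) ν / h) ^ p - c / h) =
          (‖gradient (v t) x‖ + 2 * ε) * Wp p (μ h) ν + 2 * (ε * h / h ^ p * Wp p (μ h) ν ^ p)
            - c := by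
        rw [Real.div_rpow hW hh.le]
        have : h ^ p ≠ 0 := by positivity
        field_simp
      rw [e1] at h6
      have h7 : 0 ≤ ε * h / h ^ p * Wp p (μ h) ν ^ p := by positivity
      linarith
    have h4 := abs_le.1 (E2 h hh n2 x)
    have h5 := abs_le.1 (E3 h hh.le n3 x)
    have h6 := abs_le.1 (E4 h hh.le n4 x)
    simp only [sub_self, norm_zero, zero_div, sub_zero] at h6
    rw [min_eq_right zero_le_one, sub_zero] at h6
    have h7 : L * Smu μ h (fun a => min 1 (‖a - x‖ / δ)) x ≤ ε := by
      refine (mul_le_mul_of_nonneg_left h6.2 hL).trans ?_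
      rw [mul_div_assoc', div_le_iff₀ (by positivity)]
      nlinarith
    have h8 := mul_le_mul_of_nonneg_left h7 hh.le
    have h9 : h * (e x - ε) ≤ h * Smu μ h e x := mul_le_mul_of_nonneg_left (by linarith) hh.le
    have k : h * e x ≤ h * (Av x + Φ + ε * (5 + 2 * (R + R ^ p))) := by nlinarith
    exact le_of_mul_le_mul_left k hh
  refine le_of_forall_pos_le_add fun ζ hζ => ?_
  have hQ : 0 < 5 + 2 * (R + R ^ p) := by positivity
  have h1 := main (min (ε₀ / 2) (ζ / (5 + 2 * (R + R ^ p)))) (by positivity)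
    (by have := min_le_left (ε₀ / 2) (ζ / (5 + 2 * (R + R ^ p))); linarith)
  have h2 : min (ε₀ / 2) (ζ / (5 + 2 * (R + R ^ p))) * (5 + 2 * (R + R ^ p)) ≤ ζ := by
    rw [← le_div_iff₀ hQ]
    exact min_le_right _ _
  linarith

theorem sub_main (H : Ctx p φ μ) {f : Ed d → ℝ} (hf : IsC0 f) {t : ℝ} (ht : 0 < t) (x : Ed d)
    {v : ℝ → C₀(Ed d, ℝ)} {e : C₀(Ed d, ℝ)} (hv : HasDerivAt v e t) (hw : IsC01 (v t))
    (hle : ∀ s, 0 < s → ∀ y, Slim p φ μ s f y ≤ v s y) (heq : v t x = Slim p φ μ t f x)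
    {Av : Ed d → ℝ} (hA : HasGenerator μ (v t) Av) :
    (e x : EReal) ≤ (Av x : EReal) + (phiStar φ ‖gradient (⇑(v t)) x‖₊ : EReal) := by
  obtain ⟨Φ, R, ε₀, hΦ, hR, hε₀, he, hall⟩ := phiStar_facts H.hp H.hφ ‖gradient (⇑(v t)) x‖₊
  have := sub_main_real H hf ht x hv hw hle heq hA hR hε₀ hall
  rw [he, EReal.coe_ennreal_ofReal, max_eq_left hΦ, ← EReal.coe_add]
  exact EReal.coe_le_coe_iff.2 this
end

/-- Feynman–Kac, convex version: `u(t) = 𝒮(t)f` is a viscosity solution of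
`∂_t u = A^μ u + φ*(|∇u|)` with `u(0) = f`. -/
theorem stmt_3 (d : ℕ) (hd : 1 ≤ d) (p : ℝ) (hp : 1 < p)
    (φ : ℝ≥0 → ℝ≥0∞) (hφ : IsPenalty p φ)
    (μ : ℝ → Measure (Ed d)) (hμ : IsConvSemigroup p μ) (hμ0 : WContinuousAtZero p μ)
    (f : C₀(Ed d, ℝ)) :
    ∃ u : ℝ → C₀(Ed d, ℝ),
      (∀ t : ℝ, 0 ≤ t → ∀ x, u t x = Slim p φ μ t (⇑f) x) ∧
      IsViscositySubsol φ μ f u ∧ IsViscositySupersol φ μ f u := by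
  have H : Ctx p φ μ := ⟨hp, hφ, hμ, hμ0⟩
  have hf : IsC0 (f : Ed d → ℝ) := IsC0.coe f
  let u : ℝ → C₀(Ed d, ℝ) := fun t =>
    if ht : 0 ≤ t then ⟨⟨Slim p φ μ t f, (Slim_C0 H ht hf).1⟩, (Slim_C0 H ht hf).2⟩ else 0
  have hu : ∀ t : ℝ, 0 ≤ t → ∀ x, u t x = Slim p φ μ t (⇑f) x := by
    intro t ht x
    simp only [u, dif_pos ht]
    rfl
  have hu0 : u 0 = f := by
    ext x
    rw [hu 0 le_rfl, Slim_zero H hf.buc]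
  have hcont : ContinuousOn u (Ici 0) := by
    rw [Metric.continuousOn_iff]
    intro t ht ε hε
    obtain ⟨η, hη, h⟩ := Slim_cont H hf.buc (ε := ε / 2) (by positivity)
    refine ⟨η, hη, fun s hs hst => ?_⟩
    rw [Real.dist_eq, abs_lt] at hst
    have key : dist (u s) (u t) ≤ ε / 2 := by
      rw [← ZeroAtInftyContinuousMap.dist_toBCF_eq_dist,
        BoundedContinuousFunction.dist_le (by positivity)]
      intro x
      change dist (u s x) (u t x) ≤ ε / 2
      rw [hu s hs, hu t ht, Real.dist_eq]
      rcases le_total s t with hle | hle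
      · rw [abs_sub_comm]
        exact h s t hs hle (by linarith) x
      · exact h t s ht hle (by linarith) x
    linarith
  refine ⟨u, hu, ⟨hcont, hu0, ?_⟩, ⟨hcont, hu0, ?_⟩⟩
  · intro t ht x v v' hv hle heq Av hA
    obtain ⟨hd1, _, hw⟩ := hv t ht
    exact sub_main H hf ht x hd1 hw (fun s hs y => by rw [← hu s hs.le]; exact hle s hs y)
      (by rw [heq, hu t ht.le]) hA
  · intro t ht x v v' hv hle heq Av hA
    obtain ⟨hd1, _, hw⟩ := hv t ht
    exact super_main H hf ht x hd1 hw.2.1 (fun s hs y => by rw [← hu s hs.le]; exact hle s hs y)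
      (by rw [heq, hu t ht.le]) hA
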